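/- arXiv:2603.10530 — 2 statements merged into one kernel-verified Lean document; each statement's English description precedes it below -/
import Mathlib

section
/- Let u be a smooth strictly plurisubharmonic function on an open set Ω ⊆ ℂ^n satisfying det(u_{ij̄}) = e^{(n+1)u} on Ω, set A = (u_{ij̄}), B = (u_{ij}), M = A − B·(Ā)⁻¹·B̄, and for a fixed vector s ∈ ℂ^n define the real-valued function m = Σ_{p,q} M_{pq̄} s^p \overline{s^q} on Ω. Then u^{ij̄} ∂_i∂_{j̄} m ≤ (n+1)·m at every point of Ω (summation over i, j). -/
open Complex Matrix
open scoped ComplexOrder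

noncomputable section

/-- Wirtinger derivative `∂/∂z_j` of a complex-valued function on `ℂⁿ`. -/
def wdz {n : ℕ} (f : (Fin n → ℂ) → ℂ) (j : Fin n) (z : Fin n → ℂ) : ℂ :=
  (fderiv ℝ f z (Pi.single j 1) - Complex.I * fderiv ℝ f z (Pi.single j Complex.I)) / 2

/-- Wirtinger derivative `∂/∂z̄_j` of a complex-valued function on `ℂⁿ`. -/
def wdzbar {n : ℕ} (f : (Fin n → ℂ) → ℂ) (j : Fin n) (z : Fin n → ℂ) : ℂ :=
  (fderiv ℝ f z (Pi.single j 1) + Complex.I * fderiv ℝ f z (Pi.single j Complex.I)) / 2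

/-- A real-valued function on `ℂⁿ` viewed as complex-valued. -/
def cplx {n : ℕ} (u : (Fin n → ℂ) → ℝ) : (Fin n → ℂ) → ℂ := fun z => (u z : ℂ)

/-- The complex Hessian `A = (u_{ij̄}) = (∂_i ∂_{j̄} u)`. -/
def hessA {n : ℕ} (u : (Fin n → ℂ) → ℝ) (z : Fin n → ℂ) : Matrix (Fin n) (Fin n) ℂ :=
  Matrix.of fun i j => wdz (wdzbar (cplx u) j) i z

/-- The matrix `B = (u_{ij}) = (∂_i ∂_j u)`. -/
def hessB {n : ℕ} (u : (Fin n → ℂ) → ℝ) (z : Fin n → ℂ) : Matrix (Fin n) (Fin n) ℂ :=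
  Matrix.of fun i j => wdz (wdz (cplx u) j) i z

/-- `u^{ij̄}`, the entries of the inverse of the complex Hessian, with the convention
`∑_j u^{ij̄} u_{kj̄} = δ_{ik}`. -/
def uInv {n : ℕ} (u : (Fin n → ℂ) → ℝ) (z : Fin n → ℂ) (i j : Fin n) : ℂ :=
  (hessA u z)⁻¹ j i

/-- Entrywise Wirtinger derivative `∂_i` of a matrix-valued function. -/
def mwdz {n : ℕ} (F : (Fin n → ℂ) → Matrix (Fin n) (Fin n) ℂ) (i : Fin n) (z : Fin n → ℂ) :
    Matrix (Fin n) (Fin n) ℂ :=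
  Matrix.of fun p q => wdz (fun w => F w p q) i z

/-- Entrywise Wirtinger derivative `∂_{j̄}` of a matrix-valued function. -/
def mwdzbar {n : ℕ} (F : (Fin n → ℂ) → Matrix (Fin n) (Fin n) ℂ) (j : Fin n) (z : Fin n → ℂ) :
    Matrix (Fin n) (Fin n) ℂ :=
  Matrix.of fun p q => wdzbar (fun w => F w p q) j z

/-- Entrywise complex conjugate of a matrix. -/
def mconj {n : ℕ} (M : Matrix (Fin n) (Fin n) ℂ) : Matrix (Fin n) (Fin n) ℂ :=
  M.map (starRingEnd ℂ)

/-- The real coordinate directions `x_1, …, x_n, y_1, …, y_n` of `ℂⁿ`. -/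
def realDir {n : ℕ} : (Fin n ⊕ Fin n) → (Fin n → ℂ)
  | Sum.inl j => Pi.single j 1
  | Sum.inr j => Pi.single j Complex.I

/-- The real Hessian of `u : ℂⁿ → ℝ` in the coordinates `(x_1,…,x_n,y_1,…,y_n)`. -/
def realHess {n : ℕ} (u : (Fin n → ℂ) → ℝ) (z : Fin n → ℂ) :
    Matrix (Fin n ⊕ Fin n) (Fin n ⊕ Fin n) ℝ :=
  Matrix.of fun a b => fderiv ℝ (fun w => fderiv ℝ u w (realDir b)) z (realDir a)

/-- Generic first-order complex derivative operator: derivative along `d.1` plus `I` times the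
derivative along `d.2`. -/
def DD {n : ℕ} (d : (Fin n → ℂ) × (Fin n → ℂ)) (f : (Fin n → ℂ) → ℂ) (z : Fin n → ℂ) : ℂ :=
  fderiv ℝ f z d.1 + Complex.I * fderiv ℝ f z d.2

/-- Direction giving `∂_j`. -/
def dz {n : ℕ} (j : Fin n) : (Fin n → ℂ) × (Fin n → ℂ) :=
  ((1 / 2 : ℝ) • Pi.single j 1, -((1 / 2 : ℝ) • Pi.single j Complex.I))

/-- Direction giving `∂_{j̄}`. -/
def db {n : ℕ} (j : Fin n) : (Fin n → ℂ) × (Fin n → ℂ) :=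
  ((1 / 2 : ℝ) • Pi.single j 1, ((1 / 2 : ℝ) • Pi.single j Complex.I))

/-- Smoothness of complex-valued functions. -/
def Sm {n : ℕ} (Ω : Set (Fin n → ℂ)) (f : (Fin n → ℂ) → ℂ) : Prop :=
  ContDiffOn ℝ ((⊤ : ℕ∞) : WithTop ℕ∞) f Ω

lemma wdz_eq {n : ℕ} (f : (Fin n → ℂ) → ℂ) (j : Fin n) : wdz f j = DD (dz j) f := by
  funext z
  simp only [wdz, DD, dz, map_smul, map_neg, Complex.real_smul]
  push_cast
  ring

lemma wdzbar_eq {n : ℕ} (f : (Fin n → ℂ) → ℂ) (j : Fin n) : wdzbar f j = DD (db j) f := by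
  funext z
  simp only [wdzbar, DD, db, map_smul, Complex.real_smul]
  push_cast
  ring

section DDcalculus

variable {n : ℕ} {Ω : Set (Fin n → ℂ)} {f g : (Fin n → ℂ) → ℂ}
  (d e : (Fin n → ℂ) × (Fin n → ℂ)) {z : Fin n → ℂ}

lemma Sm.cda (hΩ : IsOpen Ω) (hf : Sm Ω f) (hz : z ∈ Ω) :
    ContDiffAt ℝ ((⊤ : ℕ∞) : WithTop ℕ∞) f z :=
  ContDiffOn.contDiffAt hf (hΩ.mem_nhds hz)

lemma Sm.diff (hΩ : IsOpen Ω) (hf : Sm Ω f) (hz : z ∈ Ω) : DifferentiableAt ℝ f z :=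
  (hf.cda hΩ hz).differentiableAt (by simp)

lemma Sm.DD (hΩ : IsOpen Ω) (hf : Sm Ω f) : Sm Ω (DD d f) := by
  have h : ContDiffOn ℝ ((⊤ : ℕ∞) : WithTop ℕ∞) (fderiv ℝ f) Ω :=
    ContDiffOn.fderiv_of_isOpen hf hΩ (by simp)
  exact (h.clm_apply contDiffOn_const).add (contDiffOn_const.mul (h.clm_apply contDiffOn_const))

lemma Sm.mul (hf : Sm Ω f) (hg : Sm Ω g) : Sm Ω (fun w => f w * g w) := ContDiffOn.mul hf hg
lemma Sm.add (hf : Sm Ω f) (hg : Sm Ω g) : Sm Ω (fun w => f w + g w) := ContDiffOn.add hf hg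
lemma Sm.sub (hf : Sm Ω f) (hg : Sm Ω g) : Sm Ω (fun w => f w - g w) := ContDiffOn.sub hf hg
lemma Sm.neg (hf : Sm Ω f) : Sm Ω (fun w => - f w) := ContDiffOn.neg hf
lemma Sm.const (c : ℂ) : Sm Ω (fun _ => c) := contDiffOn_const
lemma Sm.sum {ι : Type*} {s : Finset ι} {F : ι → (Fin n → ℂ) → ℂ} (h : ∀ i ∈ s, Sm Ω (F i)) :
    Sm Ω (fun w => ∑ i ∈ s, F i w) := ContDiffOn.sum h
lemma Sm.prod {ι : Type*} {s : Finset ι} {F : ι → (Fin n → ℂ) → ℂ} (h : ∀ i ∈ s, Sm Ω (F i)) :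
    Sm Ω (fun w => ∏ i ∈ s, F i w) := contDiffOn_prod h
lemma Sm.congr (hf : Sm Ω f) (h : ∀ w ∈ Ω, g w = f w) : Sm Ω g := ContDiffOn.congr hf h

lemma DD_congr (hΩ : IsOpen Ω) (h : ∀ w ∈ Ω, f w = g w) (hz : z ∈ Ω) : DD d f z = DD d g z := by
  have : f =ᶠ[nhds z] g := Filter.eventually_of_mem (hΩ.mem_nhds hz) h
  simp only [DD, this.fderiv_eq]

lemma DD_add (hΩ : IsOpen Ω) (hf : Sm Ω f) (hg : Sm Ω g) (hz : z ∈ Ω) :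
    DD d (fun w => f w + g w) z = DD d f z + DD d g z := by
  simp only [DD, fderiv_fun_add (hf.diff hΩ hz) (hg.diff hΩ hz), _root_.add_apply]
  ring

lemma DD_sub (hΩ : IsOpen Ω) (hf : Sm Ω f) (hg : Sm Ω g) (hz : z ∈ Ω) :
    DD d (fun w => f w - g w) z = DD d f z - DD d g z := by
  simp only [DD, fderiv_fun_sub (hf.diff hΩ hz) (hg.diff hΩ hz), _root_.sub_apply]
  ring

lemma DD_mul (hΩ : IsOpen Ω) (hf : Sm Ω f) (hg : Sm Ω g) (hz : z ∈ Ω) :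
    DD d (fun w => f w * g w) z = DD d f z * g z + f z * DD d g z := by
  simp only [DD, fderiv_fun_mul (hf.diff hΩ hz) (hg.diff hΩ hz), _root_.add_apply,
    _root_.smul_apply, smul_eq_mul]
  ring

lemma DD_const (c : ℂ) : DD d (fun _ => c) z = 0 := by
  simp [DD]

lemma DD_sum (hΩ : IsOpen Ω) {ι : Type*} {s : Finset ι} {F : ι → (Fin n → ℂ) → ℂ}
    (h : ∀ i ∈ s, Sm Ω (F i)) (hz : z ∈ Ω) :
    DD d (fun w => ∑ i ∈ s, F i w) z = ∑ i ∈ s, DD d (F i) z := by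
  simp only [DD, fderiv_fun_sum (fun i hi => (h i hi).diff hΩ hz), _root_.sum_apply,
    Finset.sum_add_distrib, Finset.mul_sum]

lemma DD_prod (hΩ : IsOpen Ω) {ι : Type*} [DecidableEq ι] {s : Finset ι}
    {F : ι → (Fin n → ℂ) → ℂ} (h : ∀ i ∈ s, Sm Ω (F i)) (hz : z ∈ Ω) :
    DD d (fun w => ∏ i ∈ s, F i w) z = ∑ i ∈ s, (∏ j ∈ s.erase i, F j z) * DD d (F i) z := by
  have := (HasFDerivAt.finsetProd (u := s) (g := F) (x := z)
    (fun i hi => ((h i hi).diff hΩ hz).hasFDerivAt)).fderiv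
  simp only [DD, this, _root_.sum_apply, _root_.smul_apply, smul_eq_mul, mul_add,
    Finset.sum_add_distrib, Finset.mul_sum]
  congr 1
  exact Finset.sum_congr rfl fun i _ => by ring

lemma DD_exp (hΩ : IsOpen Ω) (hf : Sm Ω f) (hz : z ∈ Ω) :
    DD d (fun w => Complex.exp (f w)) z = Complex.exp (f z) * DD d f z := by
  have := ((hf.diff hΩ hz).hasFDerivAt.cexp).fderiv
  simp only [DD, this, _root_.smul_apply, smul_eq_mul]
  ring

lemma DD_comm (hΩ : IsOpen Ω) (hf : Sm Ω f) (hz : z ∈ Ω) :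
    DD d (DD e f) z = DD e (DD d f) z := by
  have hs : IsSymmSndFDerivAt ℝ f z :=
    (hf.cda hΩ hz).isSymmSndFDerivAt (by simp; exact WithTop.coe_le_coe.2 le_top)
  have hd : DifferentiableAt ℝ (fderiv ℝ f) z :=
    ((hf.cda hΩ hz).fderiv_right (m := 1) (WithTop.coe_le_coe.2 le_top)).differentiableAt (by simp)
  have key : ∀ (c : (Fin n → ℂ) × (Fin n → ℂ)) (v : Fin n → ℂ), fderiv ℝ (DD c f) z v
      = fderiv ℝ (fderiv ℝ f) z v c.1 + Complex.I * fderiv ℝ (fderiv ℝ f) z v c.2 := by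
    intro c v
    have h1 : ∀ x : Fin n → ℂ, HasFDerivAt (fun w => fderiv ℝ f w x)
        ((fderiv ℝ (fderiv ℝ f) z).flip x) z := fun x => by
      have := hd.hasFDerivAt.clm_apply (hasFDerivAt_const x z)
      simpa using this
    have h2 := ((h1 c.1).add ((h1 c.2).const_mul Complex.I)).fderiv
    have h3 : DD c f = (fun w => fderiv ℝ f w c.1) + (fun w => Complex.I * fderiv ℝ f w c.2) := rfl
    rw [h3, h2]
    simp
  rw [DD, DD, key, key, key, key, hs.eq d.1 e.1, hs.eq d.1 e.2, hs.eq d.2 e.1, hs.eq d.2 e.2]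
  ring

lemma DD_conj :
    DD d (fun w => (starRingEnd ℂ) (f w)) z = (starRingEnd ℂ) (DD (d.1, -d.2) f z) := by
  have : fderiv ℝ (fun w => (starRingEnd ℂ) (f w)) z
      = (Complex.conjCLE : ℂ →L[ℝ] ℂ).comp (fderiv ℝ f z) :=
    Complex.conjCLE.comp_fderiv (f := f) (x := z)
  simp only [DD, this]
  simp

end DDcalculus

/-- Entrywise derivative of a matrix-valued function. -/
def mD {n : ℕ} (d : (Fin n → ℂ) × (Fin n → ℂ)) (F : (Fin n → ℂ) → Matrix (Fin n) (Fin n) ℂ)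
    (z : Fin n → ℂ) : Matrix (Fin n) (Fin n) ℂ :=
  Matrix.of fun p q => DD d (fun w => F w p q) z

/-- Entrywise smoothness. -/
def MSm {n : ℕ} (Ω : Set (Fin n → ℂ)) (F : (Fin n → ℂ) → Matrix (Fin n) (Fin n) ℂ) : Prop :=
  ∀ p q, Sm Ω (fun w => F w p q)

section matcalculus

variable {n : ℕ} {Ω : Set (Fin n → ℂ)} {F G : (Fin n → ℂ) → Matrix (Fin n) (Fin n) ℂ}
  (d e : (Fin n → ℂ) × (Fin n → ℂ)) {z : Fin n → ℂ}

lemma MSm.mul (hF : MSm Ω F) (hG : MSm Ω G) : MSm Ω (fun w => F w * G w) := by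
  intro p q
  simp only [Matrix.mul_apply]
  exact Sm.sum fun i _ => (hF p i).mul (hG i q)

lemma MSm.add (hF : MSm Ω F) (hG : MSm Ω G) : MSm Ω (fun w => F w + G w) :=
  fun p q => (hF p q).add (hG p q)

lemma MSm.sub (hF : MSm Ω F) (hG : MSm Ω G) : MSm Ω (fun w => F w - G w) :=
  fun p q => (hF p q).sub (hG p q)

lemma MSm.mD (hΩ : IsOpen Ω) (hF : MSm Ω F) : MSm Ω (mD d F) :=
  fun p q => (hF p q).DD d hΩ

lemma MSm.det (hF : MSm Ω F) : Sm Ω (fun w => (F w).det) := by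
  simp only [Matrix.det_apply']
  exact Sm.sum fun σ _ => (Sm.const _).mul (Sm.prod fun i _ => hF _ _)

lemma MSm.adjugate (hF : MSm Ω F) : MSm Ω (fun w => (F w).adjugate) := by
  intro p q
  simp only [Matrix.adjugate_apply]
  refine MSm.det (F := fun w => (F w).updateRow q (Pi.single p 1)) fun i j => ?_
  by_cases h : i = q
  · subst h
    simp only [Matrix.updateRow_self]
    exact Sm.const _
  · simp only [Matrix.updateRow_ne h]
    exact hF i j

lemma MSm.inv (hF : MSm Ω F) (h : ∀ w ∈ Ω, (F w).det ≠ 0) : MSm Ω (fun w => (F w)⁻¹) := by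
  intro p q
  have h1 : Sm Ω (fun w => ((F w).det)⁻¹) := ContDiffOn.inv hF.det h
  refine (h1.mul (hF.adjugate p q)).congr fun w hw => ?_
  simp [Matrix.inv_def]

lemma mD_congr (hΩ : IsOpen Ω) (h : ∀ w ∈ Ω, F w = G w) (hz : z ∈ Ω) : mD d F z = mD d G z := by
  ext p q
  exact DD_congr d hΩ (fun w hw => by rw [h w hw]) hz

lemma mD_add (hΩ : IsOpen Ω) (hF : MSm Ω F) (hG : MSm Ω G) (hz : z ∈ Ω) :
    mD d (fun w => F w + G w) z = mD d F z + mD d G z := by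
  ext p q
  exact DD_add d hΩ (hF p q) (hG p q) hz

lemma mD_sub (hΩ : IsOpen Ω) (hF : MSm Ω F) (hG : MSm Ω G) (hz : z ∈ Ω) :
    mD d (fun w => F w - G w) z = mD d F z - mD d G z := by
  ext p q
  exact DD_sub d hΩ (hF p q) (hG p q) hz

lemma mD_mul (hΩ : IsOpen Ω) (hF : MSm Ω F) (hG : MSm Ω G) (hz : z ∈ Ω) :
    mD d (fun w => F w * G w) z = mD d F z * G z + F z * mD d G z := by
  ext p q
  simp only [mD, Matrix.add_apply, Matrix.mul_apply, Matrix.of_apply]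
  rw [DD_sum d hΩ (fun i _ => (hF p i).mul (hG i q)) hz, ← Finset.sum_add_distrib]
  exact Finset.sum_congr rfl fun i _ => DD_mul d hΩ (hF p i) (hG i q) hz

lemma mD_inv (hΩ : IsOpen Ω) (hF : MSm Ω F) (h : ∀ w ∈ Ω, (F w).det ≠ 0) (hz : z ∈ Ω) :
    mD d (fun w => (F w)⁻¹) z = - ((F z)⁻¹ * mD d F z * (F z)⁻¹) := by
  have hu : ∀ w ∈ Ω, IsUnit (F w).det := fun w hw => (h w hw).isUnit
  have h1 := mD_mul d hΩ hF (hF.inv h) hz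
  have h2 : mD d (fun w => F w * (F w)⁻¹) z = 0 := by
    rw [mD_congr d hΩ (G := fun _ => 1) (fun w hw => Matrix.mul_nonsing_inv _ (hu w hw)) hz]
    ext p q
    exact DD_const d _
  rw [h2] at h1
  have h3 : F z * mD d (fun w => (F w)⁻¹) z = - (mD d F z * (F z)⁻¹) :=
    (neg_eq_of_add_eq_zero_right h1.symm).symm
  calc _ = (F z)⁻¹ * (F z * mD d (fun w => (F w)⁻¹) z) := by
        rw [← mul_assoc, Matrix.nonsing_inv_mul _ (hu z hz), one_mul]
    _ = _ := by rw [h3, mul_neg, mul_assoc]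

lemma DD_trace (hΩ : IsOpen Ω) (hF : MSm Ω F) (hz : z ∈ Ω) :
    DD d (fun w => (F w).trace) z = (mD d F z).trace :=
  DD_sum d hΩ (fun i _ => hF i i) hz

lemma DD_det (hΩ : IsOpen Ω) (hF : MSm Ω F) (hz : z ∈ Ω) :
    DD d (fun w => (F w).det) z = ((F z).adjugate * mD d F z).trace := by
  have h1 : ((F z).adjugate * mD d F z).trace
      = ∑ i, ((F z).updateCol i (fun k => mD d F z k i)).det := by
    simp only [Matrix.trace, Matrix.diag]
    refine Finset.sum_congr rfl fun i _ => ?_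
    rw [← Matrix.cramer_apply, Matrix.cramer_eq_adjugate_mulVec]
    rfl
  rw [h1]
  simp only [Matrix.det_apply']
  rw [Finset.sum_comm, DD_sum d hΩ
    (fun σ _ => (Sm.const _).mul (Sm.prod fun i _ => hF _ _)) hz]
  refine Finset.sum_congr rfl fun σ _ => ?_
  rw [DD_mul d hΩ (Sm.const _) (Sm.prod fun i _ => hF _ _) hz, DD_const, zero_mul, zero_add,
    DD_prod d hΩ (fun i _ => hF _ _) hz, Finset.mul_sum]
  refine Finset.sum_congr rfl fun i _ => ?_
  rw [← Finset.prod_erase_mul _ _ (Finset.mem_univ i)]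
  congr 2
  · refine Finset.prod_congr rfl fun j hj => ?_
    rw [Matrix.updateCol_ne (Finset.ne_of_mem_erase hj)]
  · simp [mD]

end matcalculus

/-- The matrix of second derivatives `D_{e_p} D_{f_q} U`. -/
def WW {n : ℕ} (U : (Fin n → ℂ) → ℂ) (e f : Fin n → (Fin n → ℂ) × (Fin n → ℂ))
    (w : Fin n → ℂ) : Matrix (Fin n) (Fin n) ℂ :=
  Matrix.of fun p q => DD (e p) (DD (f q) U) w

/-- Weighted double sum of a family of matrices. -/
def LL {n : ℕ} (H : Matrix (Fin n) (Fin n) ℂ) (X : Fin n → Fin n → Matrix (Fin n) (Fin n) ℂ) :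
    Matrix (Fin n) (Fin n) ℂ :=
  ∑ i, ∑ j, H i j • X i j

section algebra

variable {n : ℕ} (H : Matrix (Fin n) (Fin n) ℂ) (X Y : Fin n → Fin n → Matrix (Fin n) (Fin n) ℂ)

lemma LL_add : LL H (fun i j => X i j + Y i j) = LL H X + LL H Y := by
  simp only [LL, smul_add, Finset.sum_add_distrib]

lemma LL_sub : LL H (fun i j => X i j - Y i j) = LL H X - LL H Y := by
  simp only [LL, smul_sub, Finset.sum_sub_distrib]

lemma LL_mul (C : Matrix (Fin n) (Fin n) ℂ) : LL H (fun i j => X i j * C) = LL H X * C := by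
  simp only [LL, Finset.sum_mul, Matrix.smul_mul]

lemma mul_LL (C : Matrix (Fin n) (Fin n) ℂ) : LL H (fun i j => C * X i j) = C * LL H X := by
  simp only [LL, Finset.mul_sum, Matrix.mul_smul]

end algebra

section main

variable {n : ℕ} {Ω : Set (Fin n → ℂ)} {U : (Fin n → ℂ) → ℂ} {z : Fin n → ℂ}

lemma WW_Sm (hΩ : IsOpen Ω) (hU : Sm Ω U) (e f : Fin n → (Fin n → ℂ) × (Fin n → ℂ)) :
    MSm Ω (WW U e f) := fun _ _ => (hU.DD _ hΩ).DD _ hΩ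

lemma comm3 (hΩ : IsOpen Ω) (hU : Sm Ω U) (hz : z ∈ Ω) (b c d : (Fin n → ℂ) × (Fin n → ℂ)) :
    DD b (DD c (DD d U)) z = DD c (DD d (DD b U)) z := by
  rw [DD_comm b c hΩ (hU.DD d hΩ) hz]
  exact DD_congr c hΩ (fun w hw => DD_comm b d hΩ hU hw) hz

lemma comm4 (hΩ : IsOpen Ω) (hU : Sm Ω U) (hz : z ∈ Ω) (a b c d : (Fin n → ℂ) × (Fin n → ℂ)) :
    DD a (DD b (DD c (DD d U))) z = DD c (DD d (DD a (DD b U))) z := by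
  rw [DD_congr a hΩ (fun w hw => comm3 hΩ hU hw b c d) hz]
  exact comm3 hΩ (hU.DD b hΩ) hz a c d

lemma WW_transpose (hΩ : IsOpen Ω) (hU : Sm Ω U) (hz : z ∈ Ω)
    (e f : Fin n → (Fin n → ℂ) × (Fin n → ℂ)) : WW U e f z = (WW U f e z)ᵀ := by
  ext p q
  exact DD_comm _ _ hΩ hU hz

lemma K1 (hΩ : IsOpen Ω) (hU : Sm Ω U)
    (hdet : ∀ w ∈ Ω, (WW U dz db w).det = Complex.exp (((n : ℂ) + 1) * U w))
    (d : (Fin n → ℂ) × (Fin n → ℂ)) (hz : z ∈ Ω) :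
    ((WW U dz db z)⁻¹ * mD d (WW U dz db) z).trace = ((n : ℂ) + 1) * DD d U z := by
  have h0 : (WW U dz db z).det ≠ 0 := by rw [hdet z hz]; exact Complex.exp_ne_zero _
  have h1 := DD_det d hΩ (WW_Sm hΩ hU dz db) hz
  rw [DD_congr d hΩ hdet hz, DD_exp d hΩ ((Sm.const _).mul hU) hz,
    DD_mul d hΩ (Sm.const _) hU hz, DD_const, zero_mul, zero_add, ← hdet z hz] at h1
  rw [Matrix.inv_def, Ring.inverse_eq_inv', Matrix.smul_mul, Matrix.trace_smul, ← h1, smul_eq_mul,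
    inv_mul_cancel_left₀ h0]

lemma K2 (hΩ : IsOpen Ω) (hU : Sm Ω U)
    (hdet : ∀ w ∈ Ω, (WW U dz db w).det = Complex.exp (((n : ℂ) + 1) * U w))
    (d e : (Fin n → ℂ) × (Fin n → ℂ)) (hz : z ∈ Ω) :
    ((WW U dz db z)⁻¹ * mD e (mD d (WW U dz db)) z).trace = ((n : ℂ) + 1) * DD e (DD d U) z
      + ((WW U dz db z)⁻¹ * mD e (WW U dz db) z * (WW U dz db z)⁻¹ *
          mD d (WW U dz db) z).trace := by
  have h0 : ∀ w ∈ Ω, (WW U dz db w).det ≠ 0 := fun w hw => by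
    rw [hdet w hw]; exact Complex.exp_ne_zero _
  have hA := WW_Sm hΩ hU dz db
  have h1 := DD_congr e hΩ (fun w hw => K1 hΩ hU hdet d hw) hz
  rw [DD_mul e hΩ (Sm.const _) (hU.DD d hΩ) hz, DD_const, zero_mul, zero_add,
    DD_trace e hΩ ((hA.inv h0).mul (hA.mD d hΩ)) hz, mD_mul e hΩ (hA.inv h0) (hA.mD d hΩ) hz,
    mD_inv e hΩ hA h0 hz, Matrix.trace_add, neg_mul, Matrix.trace_neg] at h1
  rw [← h1]
  ring

lemma Lfact (hΩ : IsOpen Ω) (hU : Sm Ω U)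
    (hdet : ∀ w ∈ Ω, (WW U dz db w).det = Complex.exp (((n : ℂ) + 1) * U w))
    (e f : Fin n → (Fin n → ℂ) × (Fin n → ℂ)) (hz : z ∈ Ω) :
    LL (WW U db dz z)⁻¹ (fun i j => mD (dz i) (mD (db j) (WW U e f)) z
      - mD (db j) (WW U e dz) z * (WW U db dz z)⁻¹ * mD (dz i) (WW U db f) z)
      = ((n : ℂ) + 1) • WW U e f z := by
  rw [LL_sub, sub_eq_iff_eq_add]
  have hH : ∀ i j, (WW U db dz z)⁻¹ i j = (WW U dz db z)⁻¹ j i := fun i j => by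
    rw [WW_transpose hΩ hU hz db dz, ← Matrix.transpose_nonsing_inv, Matrix.transpose_apply]
  ext p q
  have h := K2 hΩ hU hdet (f q) (e p) hz
  simp only [LL, Matrix.sum_apply, Matrix.add_apply, Matrix.smul_apply, smul_eq_mul]
  have h1 : ((WW U dz db z)⁻¹ * mD (e p) (mD (f q) (WW U dz db)) z).trace
      = ∑ i, ∑ j, (WW U db dz z)⁻¹ i j * mD (dz i) (mD (db j) (WW U e f)) z p q := by
    simp only [Matrix.trace, Matrix.diag, Matrix.mul_apply]
    rw [Finset.sum_comm]
    refine Finset.sum_congr rfl fun i _ => Finset.sum_congr rfl fun j _ => ?_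
    rw [hH]
    congr 1
    exact comm4 hΩ hU hz _ _ _ _
  have h2 : ((WW U dz db z)⁻¹ * mD (e p) (WW U dz db) z * (WW U dz db z)⁻¹ *
          mD (f q) (WW U dz db) z).trace
      = ∑ i, ∑ j, (WW U db dz z)⁻¹ i j *
        (mD (db j) (WW U e dz) z * (WW U db dz z)⁻¹ * mD (dz i) (WW U db f) z) p q := by
    rw [Matrix.trace_mul_comm, ← mul_assoc, ← mul_assoc]
    rw [Matrix.trace]
    refine Finset.sum_congr rfl fun l _ => ?_
    rw [Matrix.diag, Matrix.mul_apply]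
    refine Finset.sum_congr rfl fun k _ => ?_
    rw [hH, mul_comm]
    congr 1
    rw [mul_assoc]
    simp only [Matrix.mul_apply, Finset.sum_mul, Finset.mul_sum]
    refine Finset.sum_congr rfl fun j _ => Finset.sum_congr rfl fun i _ => ?_
    have hX : mD (e p) (WW U dz db) z i k = mD (db k) (WW U e dz) z p i :=
      (comm3 hΩ hU hz (db k) (e p) (dz i)).symm
    have hY : mD (f q) (WW U dz db) z l j = mD (dz l) (WW U db f) z j q :=
      comm3 hΩ hU hz (f q) (dz l) (db j)
    rw [hX, hY, hH]
    ring
  rw [← h1, ← h2, h]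
  rfl

lemma second_deriv {F G A : (Fin n → ℂ) → Matrix (Fin n) (Fin n) ℂ} (hΩ : IsOpen Ω)
    (hF : MSm Ω F) (hG : MSm Ω G) (hA : MSm Ω A) (h0 : ∀ w ∈ Ω, (A w).det ≠ 0)
    (d e : (Fin n → ℂ) × (Fin n → ℂ)) (hz : z ∈ Ω) :
    mD d (mD e (fun w => F w * (A w)⁻¹ * G w)) z =
      mD d (mD e F) z * (A z)⁻¹ * G z + F z * (A z)⁻¹ * mD d (mD e G) z
      - F z * (A z)⁻¹ * mD d (mD e A) z * (A z)⁻¹ * G z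
      + F z * (A z)⁻¹ * mD d A z * (A z)⁻¹ * mD e A z * (A z)⁻¹ * G z
      + F z * (A z)⁻¹ * mD e A z * (A z)⁻¹ * mD d A z * (A z)⁻¹ * G z
      + mD d F z * (A z)⁻¹ * mD e G z + mD e F z * (A z)⁻¹ * mD d G z
      - mD d F z * (A z)⁻¹ * mD e A z * (A z)⁻¹ * G z
      - mD e F z * (A z)⁻¹ * mD d A z * (A z)⁻¹ * G z
      - F z * (A z)⁻¹ * mD d A z * (A z)⁻¹ * mD e G z
      - F z * (A z)⁻¹ * mD e A z * (A z)⁻¹ * mD d G z := by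
  have hH := hA.inv h0
  have hF1 := hF.mD e hΩ
  have hG1 := hG.mD e hΩ
  have hA1 := hA.mD e hΩ
  have h1 : ∀ w ∈ Ω, mD e (fun w => F w * (A w)⁻¹ * G w) w =
      (mD e F w * (A w)⁻¹ - F w * ((A w)⁻¹ * mD e A w * (A w)⁻¹)) * G w
        + F w * (A w)⁻¹ * mD e G w := by
    intro w hw
    rw [mD_mul e hΩ (hF.mul hH) hG hw, mD_mul e hΩ hF hH hw, mD_inv e hΩ hA h0 hw, mul_neg,
      ← sub_eq_add_neg]
  rw [mD_congr d hΩ h1 hz,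
    mD_add d hΩ (((hF1.mul hH).sub (hF.mul ((hH.mul hA1).mul hH))).mul hG) ((hF.mul hH).mul hG1) hz,
    mD_mul d hΩ ((hF1.mul hH).sub (hF.mul ((hH.mul hA1).mul hH))) hG hz,
    mD_sub d hΩ (hF1.mul hH) (hF.mul ((hH.mul hA1).mul hH)) hz,
    mD_mul d hΩ hF1 hH hz, mD_mul d hΩ hF ((hH.mul hA1).mul hH) hz,
    mD_mul d hΩ (hH.mul hA1) hH hz, mD_mul d hΩ hH hA1 hz,
    mD_mul d hΩ (hF.mul hH) hG1 hz, mD_mul d hΩ hF hH hz, mD_inv d hΩ hA h0 hz]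
  noncomm_ring

lemma main_identity (hΩ : IsOpen Ω) (hU : Sm Ω U)
    (hdet : ∀ w ∈ Ω, (WW U dz db w).det = Complex.exp (((n : ℂ) + 1) * U w)) (hz : z ∈ Ω) :
    LL (WW U db dz z)⁻¹ (fun i j => mD (dz i) (mD (db j) (fun w =>
        WW U dz db w - WW U dz dz w * (WW U db dz w)⁻¹ * WW U db db w)) z)
      = ((n : ℂ) + 1) • (WW U dz db z - WW U dz dz z * (WW U db dz z)⁻¹ * WW U db db z)
      - LL (WW U db dz z)⁻¹ (fun i j =>
        (mD (dz i) (WW U dz dz) z - WW U dz dz z * (WW U db dz z)⁻¹ * mD (dz i) (WW U db dz) z)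
        * (WW U db dz z)⁻¹ *
        (mD (db j) (WW U db db) z - mD (db j) (WW U db dz) z * (WW U db dz z)⁻¹ * WW U db db z)) := by
  have h0 : ∀ w ∈ Ω, (WW U db dz w).det ≠ 0 := fun w hw => by
    rw [WW_transpose hΩ hU hw db dz, Matrix.det_transpose, hdet w hw]; exact Complex.exp_ne_zero _
  have hA := WW_Sm hΩ hU dz db
  have hA' := WW_Sm hΩ hU db dz
  have hB := WW_Sm hΩ hU dz dz
  have hB' := WW_Sm hΩ hU db db
  have hN := (hB.mul (hA'.inv h0)).mul hB'
  have fA := Lfact hΩ hU hdet dz db hz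
  have fA' := Lfact hΩ hU hdet db dz hz
  have fB := Lfact hΩ hU hdet dz dz hz
  have fB' := Lfact hΩ hU hdet db db hz
  have hinv : (WW U db dz z)⁻¹ * WW U db dz z = 1 :=
    Matrix.nonsing_inv_mul _ (h0 z hz).isUnit
  have hdd : ∀ i j, mD (dz i) (mD (db j) (fun w =>
        WW U dz db w - WW U dz dz w * (WW U db dz w)⁻¹ * WW U db db w)) z
      = mD (dz i) (mD (db j) (WW U dz db)) z - mD (dz i) (mD (db j) (fun w =>
        WW U dz dz w * (WW U db dz w)⁻¹ * WW U db db w)) z := by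
    intro i j
    rw [mD_congr (dz i) hΩ (fun w hw => mD_sub (db j) hΩ hA hN hw) hz,
      mD_sub (dz i) hΩ (hA.mD _ hΩ) (hN.mD _ hΩ) hz]
  simp only [hdd, second_deriv hΩ hB hB' hA' h0 _ _ hz]
  generalize hHdef : (WW U db dz z)⁻¹ = H at *
  generalize WW U dz dz z = B at *
  generalize WW U db db z = B' at *
  generalize WW U dz db z = A at *
  generalize WW U db dz z = A' at *
  have e1 : ((n : ℂ) + 1) • (A - B * H * B') = ((n : ℂ) + 1) • A - ((((n : ℂ) + 1) • B) * (H * B')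
      + B * H * (((n : ℂ) + 1) • B') - B * H * (((n : ℂ) + 1) • A') * (H * B')) := by
    have : B * H * (((n : ℂ) + 1) • A') * (H * B') = ((n : ℂ) + 1) • (B * H * B') := by
      rw [mul_smul_comm, mul_assoc B H A', hinv, mul_one, smul_mul_assoc, mul_assoc]
    rw [this, smul_mul_assoc, mul_smul_comm, smul_sub, mul_assoc B H B']
    abel
  rw [e1, ← fA, ← fB, ← fB', ← fA']
  simp only [← LL_mul, ← mul_LL, ← LL_sub, ← LL_add]
  congr 1
  funext i j
  noncomm_ring

end main

section final

variable {n : ℕ}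

lemma conj_DD (d : (Fin n → ℂ) × (Fin n → ℂ)) (f : (Fin n → ℂ) → ℂ) (z : Fin n → ℂ) :
    (starRingEnd ℂ) (DD (d.1, -d.2) f z) = DD d (fun w => (starRingEnd ℂ) (f w)) z :=
  (DD_conj d).symm

/-- Conjugate direction. -/
def bar (d : (Fin n → ℂ) × (Fin n → ℂ)) : (Fin n → ℂ) × (Fin n → ℂ) := (d.1, -d.2)

lemma bar_db (j : Fin n) : bar (db j) = dz j := rfl

lemma bar_dz (j : Fin n) : bar (dz j) = db j := by
  simp [bar, dz, db]

lemma conj_cplx (u : (Fin n → ℂ) → ℝ) : (fun w => (starRingEnd ℂ) (cplx u w)) = cplx u := by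
  funext w
  simp [cplx]

lemma conj_WW (u : (Fin n → ℂ) → ℝ) (z : Fin n → ℂ)
    (e f : Fin n → (Fin n → ℂ) × (Fin n → ℂ)) (p q : Fin n) :
    (starRingEnd ℂ) (WW (cplx u) (fun i => bar (e i)) (fun i => bar (f i)) z p q)
      = WW (cplx u) e f z p q := by
  simp only [WW, bar, Matrix.of_apply, conj_DD, conj_cplx]

lemma conj_WW3 (u : (Fin n → ℂ) → ℝ) (z : Fin n → ℂ)
    (e f : Fin n → (Fin n → ℂ) × (Fin n → ℂ)) (d : (Fin n → ℂ) × (Fin n → ℂ)) (p q : Fin n) :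
    (starRingEnd ℂ) (mD (bar d) (WW (cplx u) (fun i => bar (e i)) (fun i => bar (f i))) z p q)
      = mD d (WW (cplx u) e f) z p q := by
  simp only [mD, WW, bar, Matrix.of_apply, conj_DD, conj_cplx]

/-- Contraction of a matrix with `s` and its conjugate. -/
def ctr (s : Fin n → ℂ) (X : Matrix (Fin n) (Fin n) ℂ) : ℂ :=
  ∑ p, ∑ q, X p q * s p * (starRingEnd ℂ) (s q)

lemma ctr_sub (s : Fin n → ℂ) (X Y : Matrix (Fin n) (Fin n) ℂ) :
    ctr s (X - Y) = ctr s X - ctr s Y := by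
  simp only [ctr, Matrix.sub_apply, sub_mul, Finset.sum_sub_distrib]

lemma ctr_add (s : Fin n → ℂ) (X Y : Matrix (Fin n) (Fin n) ℂ) :
    ctr s (X + Y) = ctr s X + ctr s Y := by
  simp only [ctr, Matrix.add_apply, add_mul, Finset.sum_add_distrib]

lemma ctr_smul (s : Fin n → ℂ) (c : ℂ) (X : Matrix (Fin n) (Fin n) ℂ) :
    ctr s (c • X) = c * ctr s X := by
  simp only [ctr, Matrix.smul_apply, smul_eq_mul, Finset.mul_sum, mul_assoc]

lemma ctr_LL (s : Fin n → ℂ) (H : Matrix (Fin n) (Fin n) ℂ)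
    (X : Fin n → Fin n → Matrix (Fin n) (Fin n) ℂ) :
    ctr s (LL H X) = ∑ i, ∑ j, H i j * ctr s (X i j) := by
  let φ : Matrix (Fin n) (Fin n) ℂ →ₗ[ℂ] ℂ :=
    { toFun := ctr s, map_add' := ctr_add s, map_smul' := ctr_smul s }
  change φ (LL H X) = ∑ i, ∑ j, H i j * φ (X i j)
  simp only [LL, map_sum, map_smul, smul_eq_mul]

lemma DD_ctr (s : Fin n → ℂ) {Ω : Set (Fin n → ℂ)}
    {F : (Fin n → ℂ) → Matrix (Fin n) (Fin n) ℂ} (d : (Fin n → ℂ) × (Fin n → ℂ))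
    {z : Fin n → ℂ} (hΩ : IsOpen Ω) (hF : MSm Ω F) (hz : z ∈ Ω) :
    DD d (fun w => ctr s (F w)) z = ctr s (mD d F z) := by
  have h1 : ∀ p q, Sm Ω (fun w => F w p q * s p * (starRingEnd ℂ) (s q)) := fun p q =>
    ((hF p q).mul (Sm.const _)).mul (Sm.const _)
  simp only [ctr]
  rw [DD_sum d hΩ (fun p _ => Sm.sum fun q _ => h1 p q) hz]
  refine Finset.sum_congr rfl fun p _ => ?_
  rw [DD_sum d hΩ (fun q _ => h1 p q) hz]
  refine Finset.sum_congr rfl fun q _ => ?_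
  rw [DD_mul d hΩ ((hF p q).mul (Sm.const _)) (Sm.const _) hz,
    DD_mul d hΩ (hF p q) (Sm.const _) hz, DD_const, DD_const]
  simp [mD]

lemma ctr_eq (s : Fin n → ℂ) (X : Matrix (Fin n) (Fin n) ℂ) :
    ctr s X = s ⬝ᵥ (X *ᵥ star s) := by
  simp only [ctr, dotProduct, Matrix.mulVec, Finset.mul_sum, Pi.star_apply]
  refine Finset.sum_congr rfl fun p _ => Finset.sum_congr rfl fun q _ => ?_
  rw [starRingEnd_apply]
  ring

lemma ctr_nonneg (s : Fin n → ℂ) {H : Matrix (Fin n) (Fin n) ℂ} (hH : H.PosDef)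
    (E : Fin n → Matrix (Fin n) (Fin n) ℂ) :
    0 ≤ ctr s (LL H (fun i j => E i * H * (E j)ᴴ)) := by
  have h := (hH.posSemidef.kronecker hH.posSemidef).dotProduct_mulVec_nonneg
    (fun x : Fin n × Fin n => star ((s ᵥ* E x.1) x.2))
  refine le_of_le_of_eq h ?_
  have h1 : ∀ i j, ctr s (E i * H * (E j)ᴴ) = (s ᵥ* E i) ⬝ᵥ (H *ᵥ star (s ᵥ* E j)) := by
    intro i j
    rw [ctr_eq, Matrix.star_vecMul, ← Matrix.mulVec_mulVec, ← Matrix.mulVec_mulVec,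
      Matrix.dotProduct_mulVec]
  rw [ctr_LL]
  simp only [h1]
  simp only [dotProduct, Matrix.mulVec, Fintype.sum_prod_type, Matrix.kroneckerMap_apply,
    Pi.star_apply, star_star, Finset.mul_sum]
  refine Finset.sum_congr rfl fun i _ => ?_
  rw [Finset.sum_comm]
  refine Finset.sum_congr rfl fun j _ => Finset.sum_congr rfl fun k _ =>
    Finset.sum_congr rfl fun l _ => ?_
  ring

end final

theorem scalar_m_differential_inequality (n : ℕ) (Ω : Set (Fin n → ℂ)) (hΩ : IsOpen Ω)
    (u : (Fin n → ℂ) → ℝ) (hu : ContDiffOn ℝ (⊤ : ℕ∞) u Ω)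
    (hpsh : ∀ z ∈ Ω, (hessA u z).PosDef)
    (hKE : ∀ z ∈ Ω, (hessA u z).det = (Real.exp ((n + 1) * u z) : ℂ)) (s : Fin n → ℂ) :
    ∀ z ∈ Ω,
      ∑ i, ∑ j, uInv u z i j *
          wdz (wdzbar (fun w => ∑ p, ∑ q,
            (hessA u w - hessB u w * (mconj (hessA u w))⁻¹ * mconj (hessB u w)) p q *
              s p * (starRingEnd ℂ) (s q)) j) i z
        ≤ ((n : ℂ) + 1) *
            ∑ p, ∑ q,
              (hessA u z - hessB u z * (mconj (hessA u z))⁻¹ * mconj (hessB u z)) p q *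
                s p * (starRingEnd ℂ) (s q) := by
  intro z hz
  have hU : Sm Ω (cplx u) := Complex.ofRealCLM.contDiff.comp_contDiffOn hu
  have hAeq : ∀ w, hessA u w = WW (cplx u) dz db w := fun w => by
    ext p q
    simp only [hessA, WW, wdz_eq, wdzbar_eq]
  have hBeq : ∀ w, hessB u w = WW (cplx u) dz dz w := fun w => by
    ext p q
    simp only [hessB, WW, wdz_eq]
  have hAc : ∀ w, mconj (hessA u w) = WW (cplx u) db dz w := fun w => by
    ext p q
    rw [hAeq]
    have h := conj_WW u w db dz p q
    simp only [bar_dz, bar_db] at h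
    exact h
  have hBc : ∀ w, mconj (hessB u w) = WW (cplx u) db db w := fun w => by
    ext p q
    rw [hBeq]
    exact conj_WW u w db db p q
  have hdet : ∀ w ∈ Ω, (WW (cplx u) dz db w).det
      = Complex.exp (((n : ℂ) + 1) * cplx u w) := fun w hw => by
    rw [← hAeq, hKE w hw]
    simp [cplx]
  have hpd : (WW (cplx u) db dz z)⁻¹.PosDef := by
    rw [WW_transpose hΩ hU hz db dz, ← hAeq]
    exact (hpsh z hz).transpose.inv
  have huI : ∀ i j, uInv u z i j = (WW (cplx u) db dz z)⁻¹ i j := fun i j => by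
    rw [uInv, hAeq, WW_transpose hΩ hU hz db dz, ← Matrix.transpose_nonsing_inv,
      Matrix.transpose_apply]
  have h0 : ∀ w ∈ Ω, (WW (cplx u) db dz w).det ≠ 0 := fun w hw => by
    rw [WW_transpose hΩ hU hw db dz, Matrix.det_transpose, hdet w hw]; exact Complex.exp_ne_zero _
  have hM : MSm Ω (fun w => WW (cplx u) dz db w
      - WW (cplx u) dz dz w * (WW (cplx u) db dz w)⁻¹ * WW (cplx u) db db w) :=
    (WW_Sm hΩ hU dz db).sub (((WW_Sm hΩ hU dz dz).mul ((WW_Sm hΩ hU db dz).inv h0)).mul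
      (WW_Sm hΩ hU db db))
  simp only [hAc, hBc]
  simp only [hAeq, hBeq, huI, wdz_eq, wdzbar_eq]
  have hmain := congrArg (ctr s) (main_identity hΩ hU hdet hz)
  rw [ctr_LL, ctr_sub, ctr_smul] at hmain
  have hnn := ctr_nonneg s hpd (fun i => mD (dz i) (WW (cplx u) dz dz) z
    - WW (cplx u) dz dz z * (WW (cplx u) db dz z)⁻¹ * mD (dz i) (WW (cplx u) db dz) z)
  have hE : ∀ j, (mD (dz j) (WW (cplx u) dz dz) z
      - WW (cplx u) dz dz z * (WW (cplx u) db dz z)⁻¹ * mD (dz j) (WW (cplx u) db dz) z)ᴴ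
      = mD (db j) (WW (cplx u) db db) z
        - mD (db j) (WW (cplx u) db dz) z * (WW (cplx u) db dz z)⁻¹ * WW (cplx u) db db z := by
    intro j
    have a1 : (mD (dz j) (WW (cplx u) dz dz) z)ᴴ = mD (db j) (WW (cplx u) db db) z := by
      ext p q
      refine (conj_WW3 u z db db (db j) q p).trans ?_
      exact DD_congr _ hΩ (fun w hw => DD_comm _ _ hΩ hU hw) hz
    have a2 : (mD (dz j) (WW (cplx u) db dz) z)ᴴ = mD (db j) (WW (cplx u) db dz) z := by
      ext p q
      have h := conj_WW3 u z dz db (db j) q p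
      simp only [bar_dz, bar_db] at h
      refine h.trans ?_
      exact DD_congr _ hΩ (fun w hw => DD_comm _ _ hΩ hU hw) hz
    have a3 : (WW (cplx u) dz dz z)ᴴ = WW (cplx u) db db z := by
      ext p q
      refine (conj_WW u z db db q p).trans ?_
      exact DD_comm _ _ hΩ hU hz
    rw [Matrix.conjTranspose_sub, Matrix.conjTranspose_mul, Matrix.conjTranspose_mul, a1, a2, a3,
      hpd.isHermitian.eq, mul_assoc]
  simp only [hE] at hnn
  have hL : ∀ i j, DD (dz i) (DD (db j) (fun w => ctr s (WW (cplx u) dz db w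
      - WW (cplx u) dz dz w * (WW (cplx u) db dz w)⁻¹ * WW (cplx u) db db w))) z
      = ctr s (mD (dz i) (mD (db j) (fun w => WW (cplx u) dz db w
      - WW (cplx u) dz dz w * (WW (cplx u) db dz w)⁻¹ * WW (cplx u) db db w)) z) := by
    intro i j
    rw [DD_congr (dz i) hΩ (fun w hw => DD_ctr s (db j) hΩ hM hw) hz,
      DD_ctr s (dz i) hΩ (hM.mD _ hΩ) hz]
  simp only [← hL] at hmain
  refine le_of_eq_of_le hmain ?_
  exact sub_le_self _ hnn

end
end

section
/- Let n ≥ 1 and let Ω ⊂ ℂ^n be a bounded open strictly convex domain with smooth boundary. Let u : Ω → ℝ be a smooth strictly plurisubharmonic function solving det(u_{ij̄}) = e^{(n+1)u} in Ω with u(z) → +∞ as z → ∂Ω, and assume that v = e^{-u} extends to a C² function on the closure of Ω with v = 0 on ∂Ω. Set A = (u_{ij̄}) and B = (u_{ij}). Then the Hermitian matrix M = A − B·(Ā)⁻¹·B̄ is positive definite at every point of Ω. -/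
open Complex Matrix
open scoped ComplexOrder

noncomputable section

/-! ### Second derivatives -/

/-- The Levi form (times four). -/
def leviF {n : ℕ} (u : (Fin n → ℂ) → ℝ) (z w : Fin n → ℂ) : ℝ :=
  fderiv ℝ (fderiv ℝ u) z w w +
    fderiv ℝ (fderiv ℝ u) z (Complex.I • w) (Complex.I • w)

lemma aux_two_le : (2 : WithTop ℕ∞) ≤ ((⊤ : ℕ∞) : WithTop ℕ∞) :=
  WithTop.coe_le_coe.2 (le_top : (2 : ℕ∞) ≤ ⊤)

lemma aux_second_diff {n : ℕ} {Ω : Set (Fin n → ℂ)} (hΩo : IsOpen Ω)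
    {u : (Fin n → ℂ) → ℝ} (hu : ContDiffOn ℝ (⊤ : ℕ∞) u Ω) {z : Fin n → ℂ} (hz : z ∈ Ω) :
    DifferentiableAt ℝ (fderiv ℝ u) z := by
  have h1 : ContDiffAt ℝ (⊤ : ℕ∞) u z := hu.contDiffAt (hΩo.mem_nhds hz)
  have h2 : ContDiffAt ℝ 1 (fderiv ℝ u) z :=
    h1.fderiv_right (m := 1) (by rw [one_add_one_eq_two]; exact aux_two_le)
  exact h2.differentiableAt (by norm_num)

lemma aux_first_diff {n : ℕ} {Ω : Set (Fin n → ℂ)} (hΩo : IsOpen Ω)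
    {u : (Fin n → ℂ) → ℝ} (hu : ContDiffOn ℝ (⊤ : ℕ∞) u Ω) {z : Fin n → ℂ} (hz : z ∈ Ω) :
    DifferentiableAt ℝ u z := by
  have h1 : ContDiffAt ℝ (⊤ : ℕ∞) u z := hu.contDiffAt (hΩo.mem_nhds hz)
  exact h1.differentiableAt (by simp)

lemma aux_hess_cont {n : ℕ} {Ω : Set (Fin n → ℂ)} (hΩo : IsOpen Ω)
    {u : (Fin n → ℂ) → ℝ} (hu : ContDiffOn ℝ (⊤ : ℕ∞) u Ω) :
    ContinuousOn (fderiv ℝ (fderiv ℝ u)) Ω := by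
  intro z hz
  have h1 : ContDiffAt ℝ (⊤ : ℕ∞) u z := hu.contDiffAt (hΩo.mem_nhds hz)
  have h2 : ContDiffAt ℝ 1 (fderiv ℝ u) z :=
    h1.fderiv_right (m := 1) (by rw [one_add_one_eq_two]; exact aux_two_le)
  have h3 : ContDiffAt ℝ 0 (fderiv ℝ (fderiv ℝ u)) z :=
    h2.fderiv_right (m := 0) (by norm_num)
  exact h3.continuousAt.continuousWithinAt

lemma aux_hess_symm {n : ℕ} {Ω : Set (Fin n → ℂ)} (hΩo : IsOpen Ω)
    {u : (Fin n → ℂ) → ℝ} (hu : ContDiffOn ℝ (⊤ : ℕ∞) u Ω) {z : Fin n → ℂ} (hz : z ∈ Ω)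
    (v w : Fin n → ℂ) :
    fderiv ℝ (fderiv ℝ u) z v w = fderiv ℝ (fderiv ℝ u) z w v := by
  have h1 : ContDiffAt ℝ (⊤ : ℕ∞) u z := hu.contDiffAt (hΩo.mem_nhds hz)
  exact (h1.isSymmSndFDerivAt (by simpa using aux_two_le)).eq v w

/-- The real first derivative of the complexified function. -/
lemma aux_cplx_fderiv {n : ℕ} {Ω : Set (Fin n → ℂ)} (hΩo : IsOpen Ω)
    {u : (Fin n → ℂ) → ℝ} (hu : ContDiffOn ℝ (⊤ : ℕ∞) u Ω) {z : Fin n → ℂ} (hz : z ∈ Ω)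
    (w : Fin n → ℂ) :
    fderiv ℝ (cplx u) z w = ((fderiv ℝ u z w : ℝ) : ℂ) := by
  have h := (Complex.ofRealCLM.hasFDerivAt (x := u z)).comp z
    (aux_first_diff hΩo hu hz).hasFDerivAt
  have h2 : HasFDerivAt (cplx u) (Complex.ofRealCLM.comp (fderiv ℝ u z)) z := h
  rw [h2.fderiv]; rfl

lemma aux_snd {n : ℕ} {Ω : Set (Fin n → ℂ)} (hΩo : IsOpen Ω)
    {u : (Fin n → ℂ) → ℝ} (hu : ContDiffOn ℝ (⊤ : ℕ∞) u Ω) {z : Fin n → ℂ} (hz : z ∈ Ω)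
    (v v' : Fin n → ℂ) (c : ℂ) :
    HasFDerivAt (fun y => (fderiv ℝ (cplx u) y v + c * fderiv ℝ (cplx u) y v') / 2)
      ((2:ℂ)⁻¹ • (Complex.ofRealCLM.comp ((fderiv ℝ (fderiv ℝ u) z).flip v)
        + c • Complex.ofRealCLM.comp ((fderiv ℝ (fderiv ℝ u) z).flip v'))) z := by
  have key : ∀ v : Fin n → ℂ, HasFDerivAt (fun y => ((fderiv ℝ u y v : ℝ) : ℂ))
      (Complex.ofRealCLM.comp ((fderiv ℝ (fderiv ℝ u) z).flip v)) z := by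
    intro v
    have h0 := (aux_second_diff hΩo hu hz).hasFDerivAt
    have h1 : HasFDerivAt (fun y => fderiv ℝ u y v) ((fderiv ℝ (fderiv ℝ u) z).flip v) z := by
      have := h0.clm_apply (hasFDerivAt_const v z)
      have e : fderiv ℝ u z ∘SL (0 : (Fin n → ℂ) →L[ℝ] (Fin n → ℂ))
          + (fderiv ℝ (fderiv ℝ u) z).flip v = (fderiv ℝ (fderiv ℝ u) z).flip v := by
        ext w; simp
      rw [e] at this
      exact this
    exact (Complex.ofRealCLM.hasFDerivAt (x := fderiv ℝ u z v)).comp z h1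
  have h := ((key v).add ((key v').const_mul c)).const_mul ((2:ℂ)⁻¹)
  refine h.congr_of_eventuallyEq ?_
  filter_upwards [hΩo.mem_nhds hz] with y hy
  rw [aux_cplx_fderiv hΩo hu hy, aux_cplx_fderiv hΩo hu hy]
  simp only [Pi.add_apply]
  ring

lemma aux_hessA_apply {n : ℕ} {Ω : Set (Fin n → ℂ)} (hΩo : IsOpen Ω)
    {u : (Fin n → ℂ) → ℝ} (hu : ContDiffOn ℝ (⊤ : ℕ∞) u Ω) {z : Fin n → ℂ} (hz : z ∈ Ω)
    (i j : Fin n) :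
    hessA u z i j =
     ((fderiv ℝ (fderiv ℝ u) z (Pi.single i 1) (Pi.single j 1) : ℝ)
      + Complex.I * (fderiv ℝ (fderiv ℝ u) z (Pi.single i 1) (Pi.single j Complex.I) : ℝ)
      - Complex.I * ((fderiv ℝ (fderiv ℝ u) z (Pi.single i Complex.I) (Pi.single j 1) : ℝ)
      + Complex.I * (fderiv ℝ (fderiv ℝ u) z (Pi.single i Complex.I) (Pi.single j Complex.I) : ℝ)))
        / 4 := by
  have h := aux_snd hΩo hu hz (Pi.single j 1) (Pi.single j Complex.I) Complex.I
  have e : wdzbar (cplx u) j = fun y => (fderiv ℝ (cplx u) y (Pi.single j 1)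
    + Complex.I * fderiv ℝ (cplx u) y (Pi.single j Complex.I)) / 2 := rfl
  simp only [hessA, Matrix.of_apply, wdz, e]
  rw [h.fderiv]
  simp
  ring

lemma aux_hessB_apply {n : ℕ} {Ω : Set (Fin n → ℂ)} (hΩo : IsOpen Ω)
    {u : (Fin n → ℂ) → ℝ} (hu : ContDiffOn ℝ (⊤ : ℕ∞) u Ω) {z : Fin n → ℂ} (hz : z ∈ Ω)
    (i j : Fin n) :
    hessB u z i j =
     ((fderiv ℝ (fderiv ℝ u) z (Pi.single i 1) (Pi.single j 1) : ℝ)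
      - Complex.I * (fderiv ℝ (fderiv ℝ u) z (Pi.single i 1) (Pi.single j Complex.I) : ℝ)
      - Complex.I * ((fderiv ℝ (fderiv ℝ u) z (Pi.single i Complex.I) (Pi.single j 1) : ℝ)
      - Complex.I * (fderiv ℝ (fderiv ℝ u) z (Pi.single i Complex.I) (Pi.single j Complex.I) : ℝ)))
        / 4 := by
  have h := aux_snd hΩo hu hz (Pi.single j 1) (Pi.single j Complex.I) (-Complex.I)
  have e : wdz (cplx u) j = fun y => (fderiv ℝ (cplx u) y (Pi.single j 1)
    + (-Complex.I) * fderiv ℝ (cplx u) y (Pi.single j Complex.I)) / 2 := by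
    funext y; simp only [wdz]; ring
  simp only [hessB, Matrix.of_apply]
  rw [e]
  simp only [wdz]
  rw [h.fderiv]
  simp
  ring

/-- Expansion of a real bilinear form twisted to be complex sesquilinear or bilinear. `σ = 1`
gives the sesquilinear and `σ = -1` the bilinear case. -/
lemma aux_expand {n : ℕ} (D : (Fin n → ℂ) →L[ℝ] (Fin n → ℂ) →L[ℝ] ℝ) (σ : ℝ)
    (hσ : σ * σ = 1) (w w' : Fin n → ℂ) :
    ∑ i, ∑ j, w i * ((w' j).re - σ * Complex.I * (w' j).im) *
     ((D (Pi.single i 1) (Pi.single j 1) : ℝ)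
      + σ * Complex.I * (D (Pi.single i 1) (Pi.single j Complex.I) : ℝ)
      - Complex.I * ((D (Pi.single i Complex.I) (Pi.single j 1) : ℝ)
      + σ * Complex.I * (D (Pi.single i Complex.I) (Pi.single j Complex.I) : ℝ)) : ℂ)
    = (D w w' : ℝ) + σ * Complex.I * (D w (Complex.I • w') : ℝ)
      - Complex.I * ((D (Complex.I • w) w' : ℝ)
        + σ * Complex.I * (D (Complex.I • w) (Complex.I • w') : ℝ)) := by
  have dec : ∀ w : Fin n → ℂ, w = ∑ i, ((w i).re • (Pi.single i 1 : Fin n → ℂ)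
      + (w i).im • (Pi.single i Complex.I : Fin n → ℂ)) := by
    intro w
    funext k
    simp only [Finset.sum_apply, Pi.add_apply, Pi.smul_apply, Pi.single_apply]
    simp [Finset.sum_add_distrib]
  have decI : ∀ w : Fin n → ℂ, Complex.I • w = ∑ i, ((-(w i).im) • (Pi.single i 1 : Fin n → ℂ)
      + (w i).re • (Pi.single i Complex.I : Fin n → ℂ)) := by
    intro w
    rw [dec (Complex.I • w)]
    simp
  have ex : ∀ a b c d : Fin n → ℝ, D (∑ i, (a i • (Pi.single i 1 : Fin n → ℂ)
      + b i • (Pi.single i Complex.I : Fin n → ℂ))) (∑ i, (c i • (Pi.single i 1 : Fin n → ℂ)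
      + d i • (Pi.single i Complex.I : Fin n → ℂ))) =
      ∑ i, ∑ j, (a i * c j * D (Pi.single i 1) (Pi.single j 1)
        + a i * d j * D (Pi.single i 1) (Pi.single j Complex.I)
        + b i * c j * D (Pi.single i Complex.I) (Pi.single j 1)
        + b i * d j * D (Pi.single i Complex.I) (Pi.single j Complex.I)) := by
    intro a b c d
    simp only [map_sum, _root_.sum_apply, map_add, map_smul,
      _root_.add_apply, _root_.smul_apply, smul_eq_mul]
    conv_rhs => rw [Finset.sum_comm]
    refine Finset.sum_congr rfl fun j _ => ?_
    rw [Finset.mul_sum, Finset.mul_sum, ← Finset.sum_add_distrib]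
    refine Finset.sum_congr rfl fun i _ => ?_
    ring
  have e1 := ex (fun i => (w i).re) (fun i => (w i).im) (fun i => (w' i).re) (fun i => (w' i).im)
  have e2 := ex (fun i => (w i).re) (fun i => (w i).im) (fun i => -(w' i).im) (fun i => (w' i).re)
  have e3 := ex (fun i => -(w i).im) (fun i => (w i).re) (fun i => (w' i).re) (fun i => (w' i).im)
  have e4 := ex (fun i => -(w i).im) (fun i => (w i).re) (fun i => -(w' i).im) (fun i => (w' i).re)
  simp only [← dec, ← decI] at e1 e2 e3 e4
  rw [e1, e2, e3, e4]
  push_cast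
  simp only [Finset.mul_sum, ← Finset.sum_add_distrib, ← Finset.sum_sub_distrib]
  refine Finset.sum_congr rfl fun i _ => Finset.sum_congr rfl fun j _ => ?_
  have hw : w i = (w i).re + (w i).im * Complex.I := (Complex.re_add_im _).symm
  have hs : (σ:ℂ) * σ = 1 := by exact_mod_cast hσ
  have hI : Complex.I * Complex.I = -1 := Complex.I_mul_I
  generalize (w i).re = a at *
  generalize (w i).im = b at *
  rw [hw]
  grind

lemma form_A {n : ℕ} {Ω : Set (Fin n → ℂ)} (hΩo : IsOpen Ω)
    {u : (Fin n → ℂ) → ℝ} (hu : ContDiffOn ℝ (⊤ : ℕ∞) u Ω) {z : Fin n → ℂ} (hz : z ∈ Ω)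
    (x : Fin n → ℂ) :
    star x ⬝ᵥ (hessA u z *ᵥ x) = ((leviF u z (star x) / 4 : ℝ) : ℂ) := by
  have h := aux_expand (fderiv ℝ (fderiv ℝ u) z) 1 (by norm_num) (star x) (star x)
  have hs := aux_hess_symm hΩo hu hz (star x) (Complex.I • star x)
  simp only [Matrix.mulVec, dotProduct, aux_hessA_apply hΩo hu hz, Finset.mul_sum]
  have hI : Complex.I * Complex.I = -1 := Complex.I_mul_I
  have e : (leviF u z (star x) : ℂ) = (fderiv ℝ (fderiv ℝ u) z (star x) (star x) : ℝ)
      + (1:ℝ) * Complex.I * (fderiv ℝ (fderiv ℝ u) z (star x) (Complex.I • star x) : ℝ)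
      - Complex.I * ((fderiv ℝ (fderiv ℝ u) z (Complex.I • star x) (star x) : ℝ)
        + (1:ℝ) * Complex.I
          * (fderiv ℝ (fderiv ℝ u) z (Complex.I • star x) (Complex.I • star x) : ℝ)) := by
    rw [hs]; simp only [leviF]; push_cast
    grind
  push_cast
  rw [e, ← h]
  rw [Finset.sum_div]
  refine Finset.sum_congr rfl fun i _ => ?_
  rw [Finset.sum_div]
  refine Finset.sum_congr rfl fun j _ => ?_
  have hx : x j = ((star x) j).re - ((1:ℝ):ℂ) * Complex.I * ((star x) j).im := by
    apply Complex.ext <;> simp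
  conv_lhs => rw [hx]
  push_cast
  ring

lemma form_B {n : ℕ} {Ω : Set (Fin n → ℂ)} (hΩo : IsOpen Ω)
    {u : (Fin n → ℂ) → ℝ} (hu : ContDiffOn ℝ (⊤ : ℕ∞) u Ω) {z : Fin n → ℂ} (hz : z ∈ Ω)
    (w : Fin n → ℂ) :
    (w ⬝ᵥ (hessB u z *ᵥ w)).re = (fderiv ℝ (fderiv ℝ u) z w w
      - fderiv ℝ (fderiv ℝ u) z (Complex.I • w) (Complex.I • w)) / 4 := by
  have h := aux_expand (fderiv ℝ (fderiv ℝ u) z) (-1) (by norm_num) w w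
  simp only [Matrix.mulVec, dotProduct, aux_hessB_apply hΩo hu hz, Finset.mul_sum]
  rw [show (fderiv ℝ (fderiv ℝ u) z w w
      - fderiv ℝ (fderiv ℝ u) z (Complex.I • w) (Complex.I • w)) / 4
    = (((fderiv ℝ (fderiv ℝ u) z w w : ℝ)
      + ((-1:ℝ):ℂ) * Complex.I * (fderiv ℝ (fderiv ℝ u) z w (Complex.I • w) : ℝ)
      - Complex.I * ((fderiv ℝ (fderiv ℝ u) z (Complex.I • w) w : ℝ)
        + ((-1:ℝ):ℂ) * Complex.I
          * (fderiv ℝ (fderiv ℝ u) z (Complex.I • w) (Complex.I • w) : ℝ))) / 4 : ℂ).re by simp]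
  rw [← h]
  congr 1
  rw [Finset.sum_div]
  refine Finset.sum_congr rfl fun i _ => ?_
  rw [Finset.sum_div]
  refine Finset.sum_congr rfl fun j _ => ?_
  have hx : w j = (w j).re - (((-1:ℝ)):ℂ) * Complex.I * (w j).im := by
    apply Complex.ext <;> simp
  have hx2 : w i * ((w j).re - (((-1:ℝ)):ℂ) * Complex.I * (w j).im) = w i * w j := by rw [← hx]
  rw [hx2]
  push_cast
  ring

lemma hessB_symm {n : ℕ} {Ω : Set (Fin n → ℂ)} (hΩo : IsOpen Ω)
    {u : (Fin n → ℂ) → ℝ} (hu : ContDiffOn ℝ (⊤ : ℕ∞) u Ω) {z : Fin n → ℂ} (hz : z ∈ Ω) :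
    (hessB u z)ᵀ = hessB u z := by
  ext i j
  rw [Matrix.transpose_apply, aux_hessB_apply hΩo hu hz, aux_hessB_apply hΩo hu hz]
  rw [aux_hess_symm hΩo hu hz (Pi.single j 1) (Pi.single i 1),
    aux_hess_symm hΩo hu hz (Pi.single j 1) (Pi.single i Complex.I),
    aux_hess_symm hΩo hu hz (Pi.single j Complex.I) (Pi.single i 1),
    aux_hess_symm hΩo hu hz (Pi.single j Complex.I) (Pi.single i Complex.I)]
  ring

/-- The Schur complement is positive definite once the real form is. -/
lemma schur_posdef {n : ℕ} (A B : Matrix (Fin n) (Fin n) ℂ) (hA : A.PosDef) (hB : Bᵀ = B)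
    (hq : ∀ w : Fin n → ℂ, w ≠ 0 → 0 < (w ⬝ᵥ (A *ᵥ star w)).re + (w ⬝ᵥ (B *ᵥ w)).re) :
    (A - B * (mconj A)⁻¹ * mconj B).PosDef := by
  have hAc : mconj A = Aᵀ := by
    have := hA.isHermitian.eq
    ext i j
    have h2 := congrFun (congrFun this j) i
    simp only [mconj, Matrix.map_apply, Matrix.transpose_apply]
    simpa [Matrix.conjTranspose_apply] using h2
  have hBc : mconj B = Bᴴ := by
    ext i j
    have h2 := congrFun (congrFun hB i) j
    simp only [mconj, Matrix.map_apply, Matrix.conjTranspose_apply]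
    rw [Matrix.transpose_apply] at h2
    rw [h2]; rfl
  have hAT : (Aᵀ).PosDef := hA.transpose
  have hu : IsUnit (Aᵀ).det := (Matrix.isUnit_iff_isUnit_det _).1 hAT.isUnit
  rw [hAc, hBc]
  have hinv := hAT.inv.isHermitian
  refine Matrix.PosDef.of_dotProduct_mulVec_pos ?_ ?_
  · exact hA.isHermitian.sub (Matrix.isHermitian_mul_mul_conjTranspose B hinv)
  · intro x hx
    have hherm : (A - B * (Aᵀ)⁻¹ * Bᴴ).IsHermitian :=
      hA.isHermitian.sub (Matrix.isHermitian_mul_mul_conjTranspose B hinv)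
    have him : (star x ⬝ᵥ ((A - B * (Aᵀ)⁻¹ * Bᴴ) *ᵥ x)).im = 0 := hherm.im_star_dotProduct_mulVec_self x
    suffices hre : 0 < (star x ⬝ᵥ ((A - B * (Aᵀ)⁻¹ * Bᴴ) *ᵥ x)).re by
      rw [Complex.lt_def]; exact ⟨by simpa using hre, by simpa using him.symm⟩
    set w : Fin n → ℂ := star x with hw
    have hxw : x = star w := by simp [hw]
    set θ : Fin n → ℂ := -((Aᵀ)⁻¹ *ᵥ (Bᴴ *ᵥ x)) with hθ
    have hAθ : Aᵀ *ᵥ θ = -(Bᴴ *ᵥ x) := by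
      rw [hθ, Matrix.mulVec_neg, Matrix.mulVec_mulVec, Matrix.mul_nonsing_inv _ hu,
        Matrix.one_mulVec]
    -- the three bilinear quantities
    have e1 : star x ⬝ᵥ ((A - B * (Aᵀ)⁻¹ * Bᴴ) *ᵥ x) = w ⬝ᵥ (A *ᵥ star w) + w ⬝ᵥ (B *ᵥ θ) := by
      rw [Matrix.sub_mulVec, dotProduct_sub, hθ, Matrix.mulVec_neg, dotProduct_neg,
        Matrix.mulVec_mulVec, Matrix.mulVec_mulVec, ← hxw, sub_eq_add_neg, Matrix.mul_assoc]
    have e2 : (θ ⬝ᵥ (A *ᵥ star θ)) = - star (w ⬝ᵥ (B *ᵥ θ)) := by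
      rw [Matrix.dotProduct_mulVec, ← Matrix.mulVec_transpose, hAθ, neg_dotProduct,
        Matrix.star_dotProduct, Matrix.star_mulVec, hxw, star_star, dotProduct_comm,
        Matrix.dotProduct_mulVec, star_star]
    have sB : ∀ a b : Fin n → ℂ, a ⬝ᵥ (B *ᵥ b) = b ⬝ᵥ (B *ᵥ a) := by
      intro a b
      rw [Matrix.dotProduct_mulVec, ← Matrix.mulVec_transpose, hB, dotProduct_comm]
    set p := w + θ
    set q := Complex.I • (w - θ)
    have hp : (p ⬝ᵥ (A *ᵥ star p)).re + (p ⬝ᵥ (B *ᵥ p)).re + ((q ⬝ᵥ (A *ᵥ star q)).re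
        + (q ⬝ᵥ (B *ᵥ q)).re) = 2 * (star x ⬝ᵥ ((A - B * (Aᵀ)⁻¹ * Bᴴ) *ᵥ x)).re := by
      rw [e1]
      have e3 : q ⬝ᵥ (A *ᵥ star q) = (w - θ) ⬝ᵥ (A *ᵥ star (w - θ)) := by
        simp only [q, star_smul, Matrix.mulVec_smul, smul_dotProduct, dotProduct_smul, smul_eq_mul]
        rw [← mul_assoc]; simp
      have e4 : q ⬝ᵥ (B *ᵥ q) = -((w - θ) ⬝ᵥ (B *ᵥ (w - θ))) := by
        simp only [q, Matrix.mulVec_smul, smul_dotProduct, dotProduct_smul, smul_eq_mul]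
        rw [← mul_assoc]; simp
      have e2r : (θ ⬝ᵥ (A *ᵥ star θ)).re = - (w ⬝ᵥ (B *ᵥ θ)).re := by rw [e2]; simp
      rw [e3, e4]
      simp only [p, star_add, star_sub, Matrix.mulVec_add, Matrix.mulVec_sub, dotProduct_add,
        dotProduct_sub, add_dotProduct, sub_dotProduct, sB θ w, Complex.add_re, Complex.sub_re,
        Complex.neg_re]
      linarith
    have nn : ∀ a : Fin n → ℂ, 0 ≤ (a ⬝ᵥ (A *ᵥ star a)).re + (a ⬝ᵥ (B *ᵥ a)).re := by
      intro a
      by_cases h : a = 0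
      · simp [h]
      · exact (hq a h).le
    by_cases hp0 : p = 0
    · have hq0 : q ≠ 0 := by
        intro hq0
        have h1 : w - θ = 0 := by
          simpa [q] using hq0
        have h2 : w = 0 := by
          have h3 : w + w = p + (w - θ) := by simp only [p]; abel
          rw [hp0, h1, add_zero] at h3
          funext k
          have := congrFun h3 k
          simpa using this
        exact hx (by rw [hxw, h2]; simp)
      have := hq q hq0
      have := nn p
      linarith
    · have := hq p hp0
      have := nn q
      linarith

/-- A positive definite matrix is congruent to the identity. -/
lemma posdef_normalize {n : ℕ} (a : Matrix (Fin n) (Fin n) ℂ) (ha : a.PosDef) :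
    ∃ X : Matrix (Fin n) (Fin n) ℂ, Xᴴ * a * X = 1 := by
  have hs := ha.isHermitian.conjStarAlgAut_star_eigenvectorUnitary
  rw [Unitary.conjStarAlgAut_star_apply] at hs
  set U : Matrix (Fin n) (Fin n) ℂ := (ha.isHermitian.eigenvectorUnitary : Matrix (Fin n) (Fin n) ℂ)
  set l := ha.isHermitian.eigenvalues
  have hl : ∀ i, 0 < l i := ha.eigenvalues_pos
  set D : Matrix (Fin n) (Fin n) ℂ := diagonal (fun i => (((Real.sqrt (l i))⁻¹ : ℝ) : ℂ)) with hD
  have hDH : Dᴴ = D := by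
    rw [hD, Matrix.diagonal_conjTranspose]
    congr 1; funext i; simp
  refine ⟨U * D, ?_⟩
  have : (U * D)ᴴ * a * (U * D) = D * (star U * a * U) * D := by
    rw [Matrix.conjTranspose_mul, hDH, Matrix.star_eq_conjTranspose]
    simp only [Matrix.mul_assoc]
  rw [this, hs, hD, Matrix.diagonal_mul_diagonal, Matrix.diagonal_mul_diagonal,
    ← Matrix.diagonal_one]
  congr 1; funext i
  have h1 : Real.sqrt (l i) * Real.sqrt (l i) = l i := Real.mul_self_sqrt (hl i).le
  have h2 : Real.sqrt (l i) ≠ 0 := (Real.sqrt_pos.2 (hl i)).ne'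
  simp only [Function.comp_apply]
  change ((((Real.sqrt (l i))⁻¹ : ℝ) : ℂ)) * ((l i : ℝ) : ℂ) * _ = 1
  rw [← Complex.ofReal_mul, ← Complex.ofReal_mul]
  have : (Real.sqrt (l i))⁻¹ * l i * (Real.sqrt (l i))⁻¹ = 1 := by
    field_simp
    rw [Real.sq_sqrt (hl i).le]
  rw [this]; simp

/-- For a positive definite matrix, `det ≤ exp (trace - n)`. -/
lemma posdef_det_le {n : ℕ} (Q : Matrix (Fin n) (Fin n) ℂ) (hQ : Q.PosDef) :
    Q.det.re ≤ Real.exp (∑ i, ((Q i i).re - 1)) := by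
  have h1 := hQ.isHermitian.det_eq_prod_eigenvalues
  have h2 := hQ.isHermitian.trace_eq_sum_eigenvalues
  set l := hQ.isHermitian.eigenvalues
  have hl : ∀ i, 0 < l i := hQ.eigenvalues_pos
  have e1 : Q.det.re = ∏ i, l i := by
    rw [h1]
    have : (∏ i, ((l i : ℝ) : ℂ)) = ((∏ i, l i : ℝ) : ℂ) := by push_cast; rfl
    exact (congrArg Complex.re this).trans (Complex.ofReal_re _)
  have e2 : ∑ i, (Q i i).re = ∑ i, l i := by
    have h3 := congrArg Complex.re h2
    simp only [Matrix.trace, Matrix.diag_apply, Complex.re_sum] at h3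
    rw [h3]
    rfl
  rw [e1, Finset.sum_sub_distrib, e2, ← Finset.sum_sub_distrib, Real.exp_sum]
  refine Finset.prod_le_prod (fun i _ => (hl i).le) fun i _ => ?_
  have := Real.add_one_le_exp (l i - 1)
  linarith

/-- Simultaneous diagonalisation with the symmetric normalisation. -/
lemma simul_diag {n : ℕ} (a b : Matrix (Fin n) (Fin n) ℂ) (ha : a.PosDef) (hb : b.PosDef) :
    ∃ (Y : Matrix (Fin n) (Fin n) ℂ) (κ : Fin n → ℝ), (∀ i, 0 < κ i) ∧
      Yᴴ * a * Y = diagonal (fun i => (((κ i)⁻¹ : ℝ) : ℂ)) ∧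
      Yᴴ * b * Y = diagonal (fun i => ((κ i : ℝ) : ℂ)) := by
  obtain ⟨X, hX⟩ := posdef_normalize a ha
  have hXu : IsUnit X := by
    have : IsUnit X.det := by
      have := congrArg Matrix.det hX
      rw [Matrix.det_mul, Matrix.det_one] at this
      exact IsUnit.of_mul_eq_one_right _ this
    exact (Matrix.isUnit_iff_isUnit_det _).2 this
  have hb' : (Xᴴ * b * X).PosDef :=
    hb.conjTranspose_mul_mul_same (Matrix.mulVec_injective_of_isUnit hXu)
  have hs := hb'.isHermitian.conjStarAlgAut_star_eigenvectorUnitary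
  rw [Unitary.conjStarAlgAut_star_apply] at hs
  have hUU : star (hb'.isHermitian.eigenvectorUnitary : Matrix (Fin n) (Fin n) ℂ) *
     (hb'.isHermitian.eigenvectorUnitary : Matrix (Fin n) (Fin n) ℂ) = 1 := Unitary.coe_star_mul_self _
  set U : Matrix (Fin n) (Fin n) ℂ := (hb'.isHermitian.eigenvectorUnitary : Matrix (Fin n) (Fin n) ℂ)
  set l := hb'.isHermitian.eigenvalues
  have hl : ∀ i, 0 < l i := hb'.eigenvalues_pos
  set κ : Fin n → ℝ := fun i => Real.sqrt (l i) with hκ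
  have hκp : ∀ i, 0 < κ i := fun i => Real.sqrt_pos.2 (hl i)
  have hκ2 : ∀ i, κ i * κ i = l i := fun i => Real.mul_self_sqrt (hl i).le
  set D : Matrix (Fin n) (Fin n) ℂ := diagonal (fun i => (((Real.sqrt (κ i))⁻¹ : ℝ) : ℂ)) with hD
  have hDH : Dᴴ = D := by
    rw [hD, Matrix.diagonal_conjTranspose]
    congr 1; funext i; simp
  have hm : ∀ c : Matrix (Fin n) (Fin n) ℂ, (X * U * D)ᴴ * c * (X * U * D)
      = D * (star U * (Xᴴ * c * X) * U) * D := by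
    intro c
    rw [Matrix.conjTranspose_mul, Matrix.conjTranspose_mul, hDH, Matrix.star_eq_conjTranspose]
    simp only [Matrix.mul_assoc]
  have hr : ∀ i, Real.sqrt (κ i) * Real.sqrt (κ i) = κ i := fun i => Real.mul_self_sqrt (hκp i).le
  have hr0 : ∀ i, Real.sqrt (κ i) ≠ 0 := fun i => (Real.sqrt_pos.2 (hκp i)).ne'
  refine ⟨X * U * D, κ, hκp, ?_, ?_⟩
  · rw [hm, hX, Matrix.mul_one, hUU, Matrix.mul_one, hD, Matrix.diagonal_mul_diagonal]
    congr 1; funext i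
    rw [← Complex.ofReal_mul, ← mul_inv, hr]
  · rw [hm, hs, hD, Matrix.diagonal_mul_diagonal, Matrix.diagonal_mul_diagonal]
    congr 1; funext i
    change ((((Real.sqrt (κ i))⁻¹ : ℝ) : ℂ)) * ((l i : ℝ) : ℂ) * _ = _
    rw [← Complex.ofReal_mul, ← Complex.ofReal_mul]
    congr 1
    have h3 : (Real.sqrt (κ i))⁻¹ * l i * (Real.sqrt (κ i))⁻¹
      = (Real.sqrt (κ i) * Real.sqrt (κ i))⁻¹ * (κ i * κ i) := by
      rw [hκ2, mul_inv]; ring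
    rw [h3, hr]
    have := (hκp i).ne'
    field_simp

/-- The determinant comparison. -/
lemma det_compare {n : ℕ} (a b p Y : Matrix (Fin n) (Fin n) ℂ) (κ : Fin n → ℝ)
    (hκ : ∀ i, 0 < κ i) (hp : p.PosDef) (α β γ : ℝ)
    (ha : Yᴴ * a * Y = diagonal (fun i => (((κ i)⁻¹ : ℝ) : ℂ)))
    (hb : Yᴴ * b * Y = diagonal (fun i => ((κ i : ℝ) : ℂ)))
    (hda : a.det = (Real.exp α : ℝ)) (hdb : b.det = (Real.exp β : ℝ))
    (hdp : p.det = (Real.exp γ : ℝ)) :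
    γ - α / 2 - β / 2 ≤ ∑ i, (((Yᴴ * p * Y) i i).re - 1) := by
  set K : ℝ := ∏ i, κ i with hK
  have hKp : 0 < K := Finset.prod_pos fun i _ => hκ i
  set δ : ℝ := Complex.normSq Y.det with hδ
  have hdet : ∀ c : Matrix (Fin n) (Fin n) ℂ, (Yᴴ * c * Y).det = (δ : ℂ) * c.det := by
    intro c
    rw [Matrix.det_mul, Matrix.det_mul, Matrix.det_conjTranspose, hδ, Complex.normSq_eq_conj_mul_self]
    simp only [RCLike.star_def]
    ring
  have h1 : δ * Real.exp α = K⁻¹ := by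
    have := congrArg Matrix.det ha
    rw [hdet, hda, Matrix.det_diagonal] at this
    have h2 : (∏ i, (((κ i)⁻¹ : ℝ) : ℂ)) = ((K⁻¹ : ℝ) : ℂ) := by
      rw [hK, ← Finset.prod_inv_distrib]; push_cast; rfl
    rw [h2] at this
    exact_mod_cast this
  have h2 : δ * Real.exp β = K := by
    have := congrArg Matrix.det hb
    rw [hdet, hdb, Matrix.det_diagonal] at this
    have h2 : (∏ i, ((κ i : ℝ) : ℂ)) = ((K : ℝ) : ℂ) := by
      rw [hK]; push_cast; rfl
    rw [h2] at this
    exact_mod_cast this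
  have hδp : 0 < δ := by
    by_contra h
    push Not at h
    have := mul_nonpos_of_nonpos_of_nonneg h (Real.exp_pos β).le
    linarith
  have hYu : IsUnit Y := by
    rw [Matrix.isUnit_iff_isUnit_det, isUnit_iff_ne_zero]
    intro h
    rw [hδ, h] at hδp; simp at hδp
  have hQ : (Yᴴ * p * Y).PosDef :=
    hp.conjTranspose_mul_mul_same (Matrix.mulVec_injective_of_isUnit hYu)
  have h3 := posdef_det_le _ hQ
  rw [hdet, hdp, ← Complex.ofReal_mul, Complex.ofReal_re] at h3
  have h4 : δ * δ * Real.exp (α + β) = 1 := by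
    rw [Real.exp_add]
    have : (δ * Real.exp α) * (δ * Real.exp β) = 1 := by
      rw [h1, h2]; field_simp
    linarith
  have h5 : δ = Real.exp (-(α + β) / 2) := by
    have h6 : δ * δ = Real.exp (-(α + β) / 2) * Real.exp (-(α + β) / 2) := by
      rw [← Real.exp_add]
      have : -(α + β) / 2 + -(α + β) / 2 = -(α + β) := by ring
      rw [this, Real.exp_neg]
      field_simp
      rw [← h4]; ring
    exact (mul_self_inj hδp.le (Real.exp_pos _).le).1 h6
  rw [h5, ← Real.exp_add, Real.exp_le_exp] at h3
  linarith

/-- The squared Euclidean norm. -/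
def QQ {n : ℕ} (z : Fin n → ℂ) : ℝ := ∑ k, Complex.normSq (z k)

/-- The real Euclidean inner product. -/
def rip {n : ℕ} (m w : Fin n → ℂ) : ℝ := ∑ k, ((m k).re * (w k).re + (m k).im * (w k).im)

lemma QQ_nonneg {n : ℕ} (z : Fin n → ℂ) : 0 ≤ QQ z :=
  Finset.sum_nonneg fun _ _ => Complex.normSq_nonneg _

lemma QQ_zero_iff {n : ℕ} (z : Fin n → ℂ) : QQ z = 0 ↔ z = 0 := by
  unfold QQ
  rw [Finset.sum_eq_zero_iff_of_nonneg (fun _ _ => Complex.normSq_nonneg _)]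
  simp [funext_iff]

lemma QQ_star {n : ℕ} (z : Fin n → ℂ) : QQ (star z) = QQ z := by
  unfold QQ
  simp [Complex.normSq_conj]

lemma QQ_eq_dot {n : ℕ} (z : Fin n → ℂ) : (star z ⬝ᵥ z) = (QQ z : ℂ) := by
  unfold QQ dotProduct
  push_cast
  refine Finset.sum_congr rfl fun k _ => ?_
  rw [Complex.normSq_eq_conj_mul_self]
  simp

lemma QQ_line {n : ℕ} (m w : Fin n → ℂ) (s : ℝ) :
    QQ (m + s • w) = QQ m + 2 * s * rip m w + s ^ 2 * QQ w := by
  unfold QQ rip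
  rw [Finset.mul_sum, Finset.mul_sum, ← Finset.sum_add_distrib, ← Finset.sum_add_distrib]
  refine Finset.sum_congr rfl fun k _ => ?_
  simp [Complex.normSq_apply]
  ring

lemma QQ_I {n : ℕ} (w : Fin n → ℂ) : QQ (Complex.I • w) = QQ w := by
  unfold QQ; simp

lemma rip_sq_le {n : ℕ} (m w : Fin n → ℂ) : rip m w ^ 2 ≤ QQ m * QQ w := by
  have h : ∀ s : ℝ, 0 ≤ QQ w * (s * s) + (2 * rip m w) * s + QQ m := by
    intro s
    have := QQ_nonneg (m + s • w)
    rw [QQ_line] at this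
    nlinarith
  have := discrim_le_zero h
  unfold discrim at this
  nlinarith

lemma QQ_cont {n : ℕ} : Continuous (QQ : (Fin n → ℂ) → ℝ) := by
  unfold QQ
  exact continuous_finsetSum _ fun k _ => Complex.continuous_normSq.comp (continuous_apply k)

lemma norm_sq_le_QQ {n : ℕ} (z : Fin n → ℂ) : ‖z‖ ^ 2 ≤ QQ z := by
  have h : ‖z‖ ≤ Real.sqrt (QQ z) := by
    rw [pi_norm_le_iff_of_nonneg (Real.sqrt_nonneg _)]
    intro k
    apply Real.le_sqrt_of_sq_le
    rw [← Complex.normSq_eq_norm_sq]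
    exact Finset.single_le_sum (f := fun k => Complex.normSq (z k))
      (fun _ _ => Complex.normSq_nonneg _) (Finset.mem_univ k)
  calc ‖z‖ ^ 2 ≤ Real.sqrt (QQ z) ^ 2 := by gcongr
    _ = QQ z := Real.sq_sqrt (QQ_nonneg z)

lemma lower_q {n : ℕ} (a Y : Matrix (Fin n) (Fin n) ℂ) (κ : Fin n → ℝ)
    (hκ : ∀ i, 0 < κ i) (ha : a.PosDef)
    (hY : Yᴴ * a * Y = diagonal (fun i => (((κ i)⁻¹ : ℝ) : ℂ))) (Λ : ℝ) (hΛ0 : 0 < Λ)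
    (hΛ : ∀ v, (star v ⬝ᵥ (a *ᵥ v)).re ≤ Λ * QQ v) (m : Fin n → ℂ) :
    QQ m ≤ Λ * ∑ i, κ i * Complex.normSq ((Yᴴ *ᵥ m) i) := by
  set K : Matrix (Fin n) (Fin n) ℂ := diagonal (fun i => ((κ i : ℝ) : ℂ)) with hK
  have hKK : K * (Yᴴ * a * Y) = 1 := by
    rw [hY, hK, Matrix.diagonal_mul_diagonal, ← Matrix.diagonal_one]
    congr 1; funext i
    rw [← Complex.ofReal_mul, mul_inv_cancel₀ (hκ i).ne']; simp
  have h1 : (K * Yᴴ * a) * Y = 1 := by rw [← hKK]; simp only [Matrix.mul_assoc]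
  have h2 : Y * (K * Yᴴ * a) = 1 := mul_eq_one_comm.1 h1
  have h3 : a * (Y * K * Yᴴ) = 1 := by
    apply mul_eq_one_comm.1
    rw [← h2]; simp only [Matrix.mul_assoc]
  set q := Yᴴ *ᵥ m with hq
  set ω := Y *ᵥ (K *ᵥ q) with hω
  have haω : a *ᵥ ω = m := by
    have h3' : a * Y * K * Yᴴ = 1 := by rw [← h3]; simp only [Matrix.mul_assoc]
    rw [hω, hq, Matrix.mulVec_mulVec, Matrix.mulVec_mulVec, Matrix.mulVec_mulVec,
      h3', Matrix.one_mulVec]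
  have hs : star ω ⬝ᵥ m = ((∑ i, κ i * Complex.normSq (q i) : ℝ) : ℂ) := by
    rw [hω, Matrix.star_mulVec, ← Matrix.dotProduct_mulVec, ← hq]
    simp only [dotProduct, hK, Matrix.mulVec_diagonal, Pi.star_apply]
    push_cast
    refine Finset.sum_congr rfl fun i _ => ?_
    rw [Complex.normSq_eq_conj_mul_self]
    simp
    ring
  have hωm : star ω ⬝ᵥ (a *ᵥ m) = QQ m := by
    rw [Matrix.dotProduct_mulVec]
    have : star ω ᵥ* a = star m := by
      have h4 := Matrix.star_mulVec a ω
      rw [haω, ha.isHermitian.eq] at h4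
      exact h4.symm
    rw [this, QQ_eq_dot]
  have hnn : 0 ≤ (star (ω - ((Λ⁻¹ : ℝ) : ℂ) • m) ⬝ᵥ (a *ᵥ (ω - ((Λ⁻¹ : ℝ) : ℂ) • m))).re :=
    ha.posSemidef.re_dotProduct_nonneg _
  have hmm := hΛ m
  have hexp : star (ω - ((Λ⁻¹ : ℝ) : ℂ) • m) ⬝ᵥ (a *ᵥ (ω - ((Λ⁻¹ : ℝ) : ℂ) • m))
     = ((∑ i, κ i * Complex.normSq (q i) : ℝ) : ℂ) - 2 * ((Λ⁻¹ : ℝ) : ℂ) * QQ m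
      + ((Λ⁻¹ * Λ⁻¹ : ℝ) : ℂ) * (star m ⬝ᵥ (a *ᵥ m)) := by
    rw [Matrix.mulVec_sub, Matrix.mulVec_smul, haω, star_sub, star_smul, sub_dotProduct,
      dotProduct_sub, dotProduct_sub, smul_dotProduct, smul_dotProduct, dotProduct_smul,
      dotProduct_smul, hs, hωm, QQ_eq_dot]
    simp only [smul_eq_mul, RCLike.star_def, Complex.conj_ofReal]
    push_cast
    ring
  rw [hexp] at hnn
  have hre : 0 ≤ (∑ i, κ i * Complex.normSq (q i)) - 2 * Λ⁻¹ * QQ m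
      + Λ⁻¹ * Λ⁻¹ * (star m ⬝ᵥ (a *ᵥ m)).re := by
    have e : (((∑ i, κ i * Complex.normSq (q i) : ℝ) : ℂ) - 2 * ((Λ⁻¹ : ℝ) : ℂ) * QQ m
      + ((Λ⁻¹ * Λ⁻¹ : ℝ) : ℂ) * (star m ⬝ᵥ (a *ᵥ m))).re =
      (∑ i, κ i * Complex.normSq (q i)) - 2 * Λ⁻¹ * QQ m
      + Λ⁻¹ * Λ⁻¹ * (star m ⬝ᵥ (a *ᵥ m)).re := by
      rw [Complex.add_re, Complex.sub_re, Complex.ofReal_re, Complex.re_ofReal_mul]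
      norm_cast
    rwa [e] at hnn
  have hL : Λ⁻¹ * Λ = 1 := inv_mul_cancel₀ hΛ0.ne'
  have hLi : 0 < Λ⁻¹ := inv_pos.2 hΛ0
  have h7 : Λ⁻¹ * Λ⁻¹ * (star m ⬝ᵥ (a *ᵥ m)).re ≤ Λ⁻¹ * Λ⁻¹ * (Λ * QQ m) := by gcongr
  have h8 : Λ⁻¹ * Λ⁻¹ * (Λ * QQ m) = Λ⁻¹ * QQ m := by
    rw [show Λ⁻¹ * Λ⁻¹ * (Λ * QQ m) = Λ⁻¹ * (Λ⁻¹ * Λ) * QQ m by ring, hL, mul_one]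
  have h9 : Λ⁻¹ * QQ m ≤ ∑ i, κ i * Complex.normSq (q i) := by linarith
  calc QQ m = Λ * (Λ⁻¹ * QQ m) := by field_simp
    _ ≤ _ := by gcongr

lemma key_ineq {n : ℕ} {Ω : Set (Fin n → ℂ)} (hΩo : IsOpen Ω)
    {u : (Fin n → ℂ) → ℝ} (hu : ContDiffOn ℝ (⊤ : ℕ∞) u Ω)
    (hpsh : ∀ z ∈ Ω, (hessA u z).PosDef)
    (hKE : ∀ z ∈ Ω, (hessA u z).det = (Real.exp ((n + 1) * u z) : ℂ))
    {x y z : Fin n → ℂ} (hx : x ∈ Ω) (hy : y ∈ Ω) (hz : z ∈ Ω) (t : ℝ) (ht : 0 < t) :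
    ∃ (w : Fin n → Fin n → ℂ) (κ : Fin n → ℝ), (∀ i, 0 < κ i) ∧
      (∀ i, leviF u x (w i) = 4 * (κ i)⁻¹) ∧ (∀ i, leviF u y (w i) = 4 * κ i) ∧
      (∀ Λ : ℝ, 0 < Λ → (∀ v, leviF u x v ≤ 4 * Λ * QQ v) → ∀ m, QQ m ≤
        Λ * ∑ i, κ i * (rip m (w i) ^ 2 + rip m (Complex.I • w i) ^ 2)) ∧
      (n + 1) * (u z - u x / 2 - u y / 2) + 2 * n * Real.log t ≤
        ∑ i, (t ^ 2 * leviF u z (w i) / 4 - 1) := by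
  obtain ⟨Y, κ, hκ, hYa, hYb⟩ := simul_diag _ _ (hpsh x hx) (hpsh y hy)
  have hdiag : ∀ (c : Matrix (Fin n) (Fin n) ℂ) (i : Fin n), (Yᴴ * c * Y) i i =
      star (star (fun k => star (Y k i))) ⬝ᵥ (c *ᵥ (star (fun k => star (Y k i)))) := by
    intro c i
    rw [Matrix.mul_assoc]
    simp only [Matrix.mul_apply, dotProduct, Matrix.mulVec, Matrix.conjTranspose_apply,
      Pi.star_apply, star_star]
  have hlev : ∀ v ∈ Ω, ∀ i, (Yᴴ * hessA u v * Y) i i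
      = ((leviF u v (fun k => star (Y k i)) / 4 : ℝ) : ℂ) := by
    intro v hv i
    rw [hdiag, form_A hΩo hu hv, star_star]
  refine ⟨fun i k => star (Y k i), κ, hκ, ?_, ?_, ?_, ?_⟩
  · intro i
    have := hlev x hx i
    rw [hYa, Matrix.diagonal_apply_eq] at this
    have h2 := Complex.ofReal_injective this
    linarith
  · intro i
    have := hlev y hy i
    rw [hYb, Matrix.diagonal_apply_eq] at this
    have h2 := Complex.ofReal_injective this
    linarith
  · intro Λ hΛ hb m
    have := lower_q _ Y κ hκ (hpsh x hx) hYa Λ hΛ (fun v => by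
      rw [form_A hΩo hu hx, Complex.ofReal_re]
      have := hb (star v)
      rw [QQ_star] at this
      linarith) (star m)
    rw [QQ_star] at this
    refine this.trans (le_of_eq ?_)
    congr 1
    refine Finset.sum_congr rfl fun i _ => ?_
    congr 1
    have e1 : ((Yᴴ *ᵥ star m) i).re = rip m (fun k => star (Y k i)) := by
      simp only [Matrix.mulVec, dotProduct, Complex.re_sum, rip]
      refine Finset.sum_congr rfl fun k _ => ?_
      simp [Matrix.conjTranspose_apply]
      ring
    have e2 : ((Yᴴ *ᵥ star m) i).im = - rip m (Complex.I • (fun k => star (Y k i))) := by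
      simp only [Matrix.mulVec, dotProduct, Complex.im_sum, rip, ← Finset.sum_neg_distrib]
      refine Finset.sum_congr rfl fun k _ => ?_
      simp [Matrix.conjTranspose_apply]
      ring
    rw [Complex.normSq_apply, e1, e2]
    ring
  · have htp : ((t ^ 2 : ℝ) • hessA u z).PosDef := (hpsh z hz).smul (by positivity)
    have hdp : ((t ^ 2 : ℝ) • hessA u z).det
        = (Real.exp ((n + 1) * u z + 2 * n * Real.log t) : ℝ) := by
      have : (t ^ 2 : ℝ) • hessA u z = ((t ^ 2 : ℝ) : ℂ) • hessA u z := by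
        ext i j; simp
      rw [this, Matrix.det_smul, hKE z hz, Fintype.card_fin, Real.exp_add]
      have h2 : Real.exp (2 * n * Real.log t) = (t ^ 2) ^ n := by
        rw [show 2 * (n:ℝ) * Real.log t = ((2 * n : ℕ) : ℝ) * Real.log t by push_cast; ring,
          Real.exp_nat_mul, Real.exp_log ht, pow_mul]
      rw [h2]
      push_cast
      ring
    have hda : (hessA u x).det = ((Real.exp ((n + 1) * u x) : ℝ) : ℂ) := by
      rw [hKE x hx]
    have hdb : (hessA u y).det = ((Real.exp ((n + 1) * u y) : ℝ) : ℂ) := by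
      rw [hKE y hy]
    have := det_compare _ _ _ Y κ hκ htp _ _ _ hYa hYb hda hdb hdp
    have e : ∀ i, ((Yᴴ * ((t ^ 2 : ℝ) • hessA u z) * Y) i i).re
        = t ^ 2 * leviF u z (fun k => star (Y k i)) / 4 := by
      intro i
      have h3 : Yᴴ * ((t ^ 2 : ℝ) • hessA u z) * Y = (t ^ 2 : ℝ) • (Yᴴ * hessA u z * Y) := by
        simp
      rw [h3, Matrix.smul_apply, hlev z hz i, Complex.real_smul, ← Complex.ofReal_mul,
        Complex.ofReal_re]
      ring
    simp only [e] at this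
    linarith

open Filter Topology in
lemma second_deriv_nonpos {φ φ' : ℝ → ℝ} {c : ℝ}
    (h1 : ∀ᶠ s in 𝓝 (0:ℝ), HasDerivAt φ (φ' s) s) (h2 : HasDerivAt φ' c 0)
    (hmax : IsLocalMax φ 0) : c ≤ 0 := by
  by_contra hc
  push Not at hc
  have e : deriv φ =ᶠ[𝓝 0] φ' := h1.mono fun s hs => hs.deriv
  have d2 : deriv (deriv φ) 0 = c := by rw [e.deriv_eq, h2.deriv]
  have d1 : deriv φ 0 = 0 := hmax.deriv_eq_zero
  have hmin : IsLocalMin φ 0 := isLocalMin_of_deriv_deriv_pos (by rw [d2]; exact hc) d1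
    h1.self_of_nhds.continuousAt
  have hcst : φ =ᶠ[𝓝 0] fun _ => φ 0 := by
    filter_upwards [hmax, hmin] with s hs hs'
    exact le_antisymm hs hs'
  have e2 : deriv φ =ᶠ[𝓝 0] fun _ => 0 := by
    have := hcst.deriv
    simpa using this
  have d3 : deriv (deriv φ) 0 = 0 := by rw [e2.deriv_eq]; simp
  linarith

open Filter Topology in
lemma line_nhds {n : ℕ} {Ω : Set (Fin n → ℂ)} (hΩo : IsOpen Ω) {z : Fin n → ℂ} (hz : z ∈ Ω)
    (w : Fin n → ℂ) : ∀ᶠ s in 𝓝 (0:ℝ), z + s • w ∈ Ω := by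
  have hc : Continuous fun s : ℝ => z + s • w := by fun_prop
  have : Tendsto (fun s : ℝ => z + s • w) (𝓝 0) (𝓝 z) := by
    have := hc.tendsto 0
    simpa using this
  exact this.eventually (hΩo.mem_nhds hz)

lemma line_hasDerivAt {n : ℕ} (z w : Fin n → ℂ) (s : ℝ) :
    HasDerivAt (fun s : ℝ => z + s • w) w s := by
  have := ((hasDerivAt_id s).smul_const w).const_add z
  simpa using this

lemma line_d1 {n : ℕ} {Ω : Set (Fin n → ℂ)} (hΩo : IsOpen Ω)
    {u : (Fin n → ℂ) → ℝ} (hu : ContDiffOn ℝ (⊤ : ℕ∞) u Ω) {z w : Fin n → ℂ} {s : ℝ}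
    (hz : z + s • w ∈ Ω) :
    HasDerivAt (fun s : ℝ => u (z + s • w)) (fderiv ℝ u (z + s • w) w) s :=
  (aux_first_diff hΩo hu hz).hasFDerivAt.comp_hasDerivAt s (line_hasDerivAt z w s)

lemma line_d2 {n : ℕ} {Ω : Set (Fin n → ℂ)} (hΩo : IsOpen Ω)
    {u : (Fin n → ℂ) → ℝ} (hu : ContDiffOn ℝ (⊤ : ℕ∞) u Ω) {z w : Fin n → ℂ} {s : ℝ}
    (hz : z + s • w ∈ Ω) :
    HasDerivAt (fun s : ℝ => fderiv ℝ u (z + s • w) w)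
      (fderiv ℝ (fderiv ℝ u) (z + s • w) w w) s := by
  have h := (aux_second_diff hΩo hu hz).hasFDerivAt.comp_hasDerivAt s (line_hasDerivAt z w s)
  have h2 := h.clm_apply (hasDerivAt_const s w)
  simpa using h2

open Filter Topology in
lemma max_cond {n : ℕ} {Ω : Set (Fin n → ℂ)} (hΩo : IsOpen Ω)
    {u : (Fin n → ℂ) → ℝ} (hu : ContDiffOn ℝ (⊤ : ℕ∞) u Ω) {x y z : Fin n → ℂ}
    (hx : x ∈ Ω) (hy : y ∈ Ω) (hz : z ∈ Ω) (a b d : Fin n → ℂ) {j j' : ℝ → ℝ} {c : ℝ}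
    (hj : ∀ s, HasDerivAt j (j' s) s) (hj' : HasDerivAt j' c 0)
    (hmax : IsLocalMax (fun s : ℝ => u (z + s • d) - u (x + s • a) / 2 - u (y + s • b) / 2 + j s) 0) :
    fderiv ℝ (fderiv ℝ u) z d d ≤ fderiv ℝ (fderiv ℝ u) x a a / 2
      + fderiv ℝ (fderiv ℝ u) y b b / 2 - c := by
  have h1 : ∀ᶠ s in 𝓝 (0:ℝ), HasDerivAt
      (fun s : ℝ => u (z + s • d) - u (x + s • a) / 2 - u (y + s • b) / 2 + j s)
      ((fun s : ℝ => fderiv ℝ u (z + s • d) d - fderiv ℝ u (x + s • a) a / 2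
        - fderiv ℝ u (y + s • b) b / 2 + j' s) s) s := by
    filter_upwards [line_nhds hΩo hx a, line_nhds hΩo hy b, line_nhds hΩo hz d] with s ha hb hd
    exact (((line_d1 hΩo hu hd).sub ((line_d1 hΩo hu ha).div_const 2)).sub
      ((line_d1 hΩo hu hb).div_const 2)).add (hj s)
  have h2 : HasDerivAt (fun s : ℝ => fderiv ℝ u (z + s • d) d - fderiv ℝ u (x + s • a) a / 2
        - fderiv ℝ u (y + s • b) b / 2 + j' s) (fderiv ℝ (fderiv ℝ u) (z + (0:ℝ) • d) d d
        - fderiv ℝ (fderiv ℝ u) (x + (0:ℝ) • a) a a / 2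
        - fderiv ℝ (fderiv ℝ u) (y + (0:ℝ) • b) b b / 2 + c) 0 := by
    exact (((line_d2 hΩo hu (by simpa using hz)).sub
      ((line_d2 hΩo hu (by simpa using hx)).div_const 2)).sub
      ((line_d2 hΩo hu (by simpa using hy)).div_const 2)).add hj'
  have := second_deriv_nonpos h1 h2 hmax
  simp only [zero_smul, add_zero] at this
  linarith

open Filter Topology in
lemma sublevel_compact {n : ℕ} {Ω : Set (Fin n → ℂ)} (hΩo : IsOpen Ω)
    (hΩb : Bornology.IsBounded Ω) {u : (Fin n → ℂ) → ℝ} (hu : ContDiffOn ℝ (⊤ : ℕ∞) u Ω)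
    (hblow : ∀ p ∈ frontier Ω, Filter.Tendsto u (nhdsWithin p Ω) Filter.atTop) (C : ℝ) :
    IsCompact {z | z ∈ Ω ∧ u z ≤ C} := by
  refine Metric.isCompact_of_isClosed_isBounded ?_ (hΩb.subset fun z hz => hz.1)
  refine isClosed_of_closure_subset fun z hz => ?_
  rw [mem_closure_iff_frequently] at hz
  by_cases hzΩ : z ∈ Ω
  · refine ⟨hzΩ, ?_⟩
    by_contra hlt
    push Not at hlt
    have : ∀ᶠ y in 𝓝 z, C < u y :=
      (aux_first_diff hΩo hu hzΩ).continuousAt.eventually (lt_mem_nhds hlt)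
    obtain ⟨y, hy, hy'⟩ := (hz.and_eventually this).exists
    exact absurd hy.2 (not_le.2 hy')
  · exfalso
    have hcl : z ∈ closure Ω := mem_closure_iff_frequently.2 (hz.mono fun y hy => hy.1)
    have hfr : z ∈ frontier Ω := by
      rw [hΩo.frontier_eq]; exact ⟨hcl, hzΩ⟩
    have h1 := (hblow z hfr).eventually (eventually_gt_atTop C)
    rw [eventually_nhdsWithin_iff] at h1
    obtain ⟨y, hy, hy'⟩ := (hz.and_eventually h1).exists
    exact absurd hy.2 (not_le.2 (hy' hy.1))

lemma bdd_below {n : ℕ} {Ω : Set (Fin n → ℂ)} (hΩo : IsOpen Ω)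
    (hΩb : Bornology.IsBounded Ω) {u : (Fin n → ℂ) → ℝ} (hu : ContDiffOn ℝ (⊤ : ℕ∞) u Ω)
    (hblow : ∀ p ∈ frontier Ω, Filter.Tendsto u (nhdsWithin p Ω) Filter.atTop) :
    ∃ L : ℝ, ∀ z ∈ Ω, L ≤ u z := by
  by_cases hne : ∃ z, z ∈ Ω
  · obtain ⟨z0, hz0⟩ := hne
    obtain ⟨p, hp, hmin⟩ := (sublevel_compact hΩo hΩb hu hblow (u z0)).exists_isMinOn
      ⟨z0, hz0, le_rfl⟩ (hu.continuousOn.mono fun z hz => hz.1)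
    refine ⟨u p, fun z hz => ?_⟩
    by_cases h : u z ≤ u z0
    · exact hmin ⟨hz, h⟩
    · push Not at h
      exact hp.2.trans h.le
  · exact ⟨0, fun z hz => absurd ⟨z, hz⟩ hne⟩

lemma levi_step {n : ℕ} {u : (Fin n → ℂ) → ℝ} {x y z w : Fin n → ℂ} {κ t ν c1 c2 : ℝ}
    (hκ : 0 < κ) (hν : ν = (κ ^ 2 - 1) / (κ ^ 2 + 1))
    (hx : leviF u x w = 4 * κ⁻¹) (hy : leviF u y w = 4 * κ)
    (h1 : fderiv ℝ (fderiv ℝ u) z (t • w) (t • w) ≤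
      fderiv ℝ (fderiv ℝ u) x ((1 + ν) • w) ((1 + ν) • w) / 2
      + fderiv ℝ (fderiv ℝ u) y ((1 - ν) • w) ((1 - ν) • w) / 2 - c1)
    (h2 : fderiv ℝ (fderiv ℝ u) z (t • (Complex.I • w)) (t • (Complex.I • w)) ≤
      fderiv ℝ (fderiv ℝ u) x ((1 + ν) • (Complex.I • w)) ((1 + ν) • (Complex.I • w)) / 2
      + fderiv ℝ (fderiv ℝ u) y ((1 - ν) • (Complex.I • w)) ((1 - ν) • (Complex.I • w)) / 2 - c2) :
    t ^ 2 * leviF u z w / 4 - 1 ≤ - ν ^ 2 / 2 - (c1 + c2) / 4 := by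
  have key : (1 + ν) ^ 2 * (4 * κ⁻¹) / 2 + (1 - ν) ^ 2 * (4 * κ) / 2 ≤ 4 - 2 * ν ^ 2 := by
    have e : (4 - 2 * ν ^ 2) - ((1 + ν) ^ 2 * (4 * κ⁻¹) / 2 + (1 - ν) ^ 2 * (4 * κ) / 2)
        = 2 * ((κ - 1) ^ 2 / (κ ^ 2 + 1)) ^ 2 := by
      rw [hν]; field_simp; ring
    have : 0 ≤ 2 * ((κ - 1) ^ 2 / (κ ^ 2 + 1)) ^ 2 := by positivity
    linarith
  rw [← hx, ← hy] at key
  simp only [map_smul, ContinuousLinearMap.smul_apply, smul_eq_mul] at h1 h2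
  unfold leviF at *
  nlinarith

open Filter Topology in
lemma midpoint_t {n : ℕ} {Ω : Set (Fin n → ℂ)} (hΩo : IsOpen Ω)
    (hΩb : Bornology.IsBounded Ω) (hΩc : Convex ℝ Ω)
    {u : (Fin n → ℂ) → ℝ} (hu : ContDiffOn ℝ (⊤ : ℕ∞) u Ω)
    (hpsh : ∀ z ∈ Ω, (hessA u z).PosDef)
    (hKE : ∀ z ∈ Ω, (hessA u z).det = (Real.exp ((n + 1) * u z) : ℂ))
    (hblow : ∀ p ∈ frontier Ω, Filter.Tendsto u (nhdsWithin p Ω) Filter.atTop)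
    {c x0 y0 : Fin n → ℂ} (hc : c ∈ Ω) (hx0 : x0 ∈ Ω) (hy0 : y0 ∈ Ω) {t : ℝ}
    (ht : 0 < t) (ht1 : t < 1) :
    (n + 1) * (u (t • ((1/2 : ℝ) • (x0 + y0)) + (1 - t) • c) - u x0 / 2 - u y0 / 2)
      + 2 * n * Real.log t ≤ 0 := by
  by_contra hcon
  push Not at hcon
  obtain ⟨L, hL⟩ := bdd_below hΩo hΩb hu hblow
  have hlog : Real.log t ≤ 0 := Real.log_nonpos ht.le ht1.le
  have hn0 : (0:ℝ) ≤ n := Nat.cast_nonneg n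
  set Z : (Fin n → ℂ) × (Fin n → ℂ) → (Fin n → ℂ) :=
    fun p => t • ((1/2 : ℝ) • (p.1 + p.2)) + (1 - t) • c with hZ
  have hZc : Continuous Z := by rw [hZ]; fun_prop
  have hmid : ∀ p : (Fin n → ℂ) × (Fin n → ℂ), p.1 ∈ Ω → p.2 ∈ Ω → (1/2:ℝ) • (p.1 + p.2) ∈ Ω := by
    intro p h1 h2
    rw [smul_add]
    exact hΩc h1 h2 (by norm_num) (by norm_num) (by norm_num)
  set g : (Fin n → ℂ) → (Fin n → ℂ) := fun z => t • z + (1 - t) • c with hg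
  have hgc : Continuous g := by rw [hg]; fun_prop
  have hcl : IsCompact (closure Ω) := hΩb.isCompact_closure
  have hgΩ : ∀ z ∈ closure Ω, g z ∈ Ω := by
    intro z hz
    have := hΩc.combo_closure_interior_mem_interior hz (by rwa [hΩo.interior_eq] : c ∈ interior Ω)
      ht.le (by linarith : 0 < 1 - t) (by ring)
    rwa [hΩo.interior_eq] at this
  obtain ⟨C0, hC0⟩ := (hcl.image hgc).bddAbove_image (f := u)
    (hu.continuousOn.mono (by rintro _ ⟨z, hz, rfl⟩; exact hgΩ z hz))
  have hC0' : ∀ z ∈ Ω, u (g z) ≤ C0 := fun z hz =>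
    hC0 ⟨g z, ⟨z, subset_closure hz, rfl⟩, rfl⟩
  set Φ : (Fin n → ℂ) × (Fin n → ℂ) → ℝ := fun p => u (Z p) - u p.1 / 2 - u p.2 / 2 with hΦ
  set K : Set (Fin n → ℂ) := {z | z ∈ Ω ∧ u z ≤ 2 * C0 - L} with hK
  have hKc : IsCompact K := sublevel_compact hΩo hΩb hu hblow _
  have hKK : ∀ p : (Fin n → ℂ) × (Fin n → ℂ), p.1 ∈ Ω → p.2 ∈ Ω → 0 < Φ p → p ∈ K ×ˢ K := by
    intro p h1 h2 hp
    have a1 := hL _ h1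
    have a2 := hL _ h2
    have a3 : u (Z p) ≤ C0 := hC0' _ (hmid p h1 h2)
    simp only [hΦ] at hp
    refine ⟨⟨h1, ?_⟩, ⟨h2, ?_⟩⟩ <;> linarith
  have hΦ0 : 0 < Φ (x0, y0) := by
    have : 0 < ((n:ℝ) + 1) * Φ (x0, y0) := by
      have : 2 * (n:ℝ) * Real.log t ≤ 0 := mul_nonpos_of_nonneg_of_nonpos (by positivity) hlog
      simp only [hΦ, hZ]; linarith
    exact (pos_iff_pos_of_mul_pos this).1 (by positivity)
  have hZΩ : ∀ p : (Fin n → ℂ) × (Fin n → ℂ), p.1 ∈ Ω → p.2 ∈ Ω → Z p ∈ Ω := fun p h1 h2 =>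
    hgΩ _ (subset_closure (hmid p h1 h2))
  have hΦc : ContinuousOn Φ (K ×ˢ K) := by
    have h1 : ContinuousOn (fun p => u (Z p)) (K ×ˢ K) :=
      hu.continuousOn.comp hZc.continuousOn fun p hp => hZΩ p hp.1.1 hp.2.1
    have h2 : ContinuousOn (fun p : (Fin n → ℂ) × (Fin n → ℂ) => u p.1) (K ×ˢ K) :=
      hu.continuousOn.comp continuous_fst.continuousOn fun p hp => hp.1.1
    have h3 : ContinuousOn (fun p : (Fin n → ℂ) × (Fin n → ℂ) => u p.2) (K ×ˢ K) :=
      hu.continuousOn.comp continuous_snd.continuousOn fun p hp => hp.2.1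
    exact (h1.sub (h2.div_const 2)).sub (h3.div_const 2)
  have hp0 : (x0, y0) ∈ K ×ˢ K := hKK _ hx0 hy0 hΦ0
  obtain ⟨⟨x, y⟩, hp, hmax⟩ := (hKc.prod hKc).exists_isMaxOn ⟨_, hp0⟩ hΦc
  have hx : x ∈ Ω := hp.1.1
  have hy : y ∈ Ω := hp.2.1
  have hle0 : Φ (x0, y0) ≤ Φ (x, y) := hmax hp0
  have hglob : ∀ q : (Fin n → ℂ) × (Fin n → ℂ), q.1 ∈ Ω → q.2 ∈ Ω → Φ q ≤ Φ (x, y) := by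
    intro q h1 h2
    by_cases hq : 0 < Φ q
    · exact hmax (hKK q h1 h2 hq)
    · push Not at hq; linarith
  have hz : Z (x, y) ∈ Ω := hZΩ _ hx hy
  obtain ⟨w, κ, hκ, hwx, hwy, -, hfin⟩ := key_ineq hΩo hu hpsh hKE hx hy hz t ht
  have hloc : ∀ (v : Fin n → ℂ) (ν : ℝ), fderiv ℝ (fderiv ℝ u) (Z (x, y)) (t • v) (t • v) ≤
      fderiv ℝ (fderiv ℝ u) x ((1 + ν) • v) ((1 + ν) • v) / 2
      + fderiv ℝ (fderiv ℝ u) y ((1 - ν) • v) ((1 - ν) • v) / 2 - 0 := by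
    intro v ν
    refine max_cond hΩo hu hx hy hz _ _ _ (j := fun _ => 0) (j' := fun _ => 0)
      (fun s => hasDerivAt_const _ _) (hasDerivAt_const _ _) ?_
    filter_upwards [line_nhds hΩo hx ((1 + ν) • v), line_nhds hΩo hy ((1 - ν) • v)] with s h1 h2
    have := hglob (x + s • (1 + ν) • v, y + s • (1 - ν) • v) h1 h2
    have e : Z (x + s • (1 + ν) • v, y + s • (1 - ν) • v) = Z (x, y) + s • t • v := by
      simp only [hZ]; module
    simp only [hΦ, e] at this
    simpa using this
  have hsum : ∑ i, (t ^ 2 * leviF u (Z (x, y)) (w i) / 4 - 1) ≤ 0 := by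
    refine Finset.sum_nonpos fun i _ => ?_
    have := levi_step (hκ i) rfl (hwx i) (hwy i) (hloc (w i) _) (hloc (Complex.I • w i) _)
    have h2 := sq_nonneg ((κ i ^ 2 - 1) / (κ i ^ 2 + 1))
    linarith
  have hf : ((n:ℝ) + 1) * Φ (x0, y0) ≤ (n + 1) * Φ (x, y) := by gcongr
  simp only [hΦ] at hf
  simp only [hZ] at hf hfin hsum
  linarith

open Filter Topology in
lemma midpoint_convex {n : ℕ} {Ω : Set (Fin n → ℂ)} (hΩo : IsOpen Ω)
    (hΩb : Bornology.IsBounded Ω) (hΩc : Convex ℝ Ω)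
    {u : (Fin n → ℂ) → ℝ} (hu : ContDiffOn ℝ (⊤ : ℕ∞) u Ω)
    (hpsh : ∀ z ∈ Ω, (hessA u z).PosDef)
    (hKE : ∀ z ∈ Ω, (hessA u z).det = (Real.exp ((n + 1) * u z) : ℂ))
    (hblow : ∀ p ∈ frontier Ω, Filter.Tendsto u (nhdsWithin p Ω) Filter.atTop)
    {x y : Fin n → ℂ} (hx : x ∈ Ω) (hy : y ∈ Ω) :
    u ((1/2 : ℝ) • (x + y)) ≤ u x / 2 + u y / 2 := by
  have hm : (1/2 : ℝ) • (x + y) ∈ Ω := by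
    rw [smul_add]
    exact hΩc hx hy (by norm_num) (by norm_num) (by norm_num)
  set F : ℝ → ℝ := fun t => (n + 1) * (u (t • ((1/2 : ℝ) • (x + y)) + (1 - t) • x) - u x / 2 - u y / 2)
      + 2 * n * Real.log t with hF
  have hFc : ContinuousAt F 1 := by
    have h1 : ContinuousAt (fun t : ℝ => t • ((1/2 : ℝ) • (x + y)) + (1 - t) • x) 1 := by fun_prop
    have h2 : ContinuousAt u ((1:ℝ) • ((1/2 : ℝ) • (x + y)) + (1 - (1:ℝ)) • x) := by
      rw [one_smul, sub_self, zero_smul, add_zero]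
      exact (aux_first_diff hΩo hu hm).continuousAt
    have h3 : ContinuousAt (fun t : ℝ => u (t • ((1/2 : ℝ) • (x + y)) + (1 - t) • x)) 1 :=
      ContinuousAt.comp (f := fun t : ℝ => t • ((1/2 : ℝ) • (x + y)) + (1 - t) • x) h2 h1
    have h4 : ContinuousAt Real.log 1 := Real.continuousAt_log one_ne_zero
    exact (((h3.sub continuousAt_const).sub continuousAt_const).const_mul _).add (h4.const_mul _)
  have hlim : Tendsto F (𝓝[<] 1) (𝓝 (F 1)) := hFc.tendsto.mono_left nhdsWithin_le_nhds
  have : F 1 ≤ 0 := by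
    refine le_of_tendsto hlim ?_
    have : Set.Ioo (0:ℝ) 1 ∈ 𝓝[<] (1:ℝ) := Ioo_mem_nhdsLT one_pos
    filter_upwards [this] with t ht
    exact midpoint_t hΩo hΩb hΩc hu hpsh hKE hblow hx hx hy ht.1 ht.2
  simp only [hF, one_smul, sub_self, zero_smul, add_zero, Real.log_one, mul_zero] at this
  have hn0 : (0:ℝ) < n + 1 := by positivity
  have := nonpos_of_mul_nonpos_right this hn0
  linarith

/-- Uniform strict midpoint convexity near `z`. -/
def GoodAt {n : ℕ} (Ω : Set (Fin n → ℂ)) (u : (Fin n → ℂ) → ℝ) (z : Fin n → ℂ) : Prop :=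
  ∃ ε : ℝ, 0 < ε ∧ ∀ᶠ m in nhds z, ∀ v, m + v ∈ Ω → m - v ∈ Ω →
    2 * u m + ε * QQ v ≤ u (m + v) + u (m - v)

lemma goodAt_open {n : ℕ} (Ω : Set (Fin n → ℂ)) (u : (Fin n → ℂ) → ℝ) :
    IsOpen {z | GoodAt Ω u z} := by
  rw [isOpen_iff_mem_nhds]
  rintro z ⟨ε, hε, h⟩
  filter_upwards [eventually_eventually_nhds.2 h] with y hy
  exact ⟨ε, hε, hy⟩

lemma QQ_line_d1 {n : ℕ} (m w : Fin n → ℂ) (s : ℝ) :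
    HasDerivAt (fun s : ℝ => QQ (m + s • w)) (2 * rip m w + 2 * s * QQ w) s := by
  have e : (fun s : ℝ => QQ (m + s • w)) = fun s => QQ m + 2 * s * rip m w + s ^ 2 * QQ w := by
    funext s; exact QQ_line m w s
  rw [e]
  have h1 := (((hasDerivAt_id s).const_mul 2).mul_const (rip m w)).const_add (QQ m)
  have h2 := ((hasDerivAt_id s).pow 2).mul_const (QQ w)
  exact (h1.add h2).congr_deriv (by simp)

lemma QQ_smul {n : ℕ} (s : ℝ) (w : Fin n → ℂ) : QQ (s • w) = s ^ 2 * QQ w := by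
  have := QQ_line 0 w s
  rw [zero_add] at this
  rw [this]
  unfold QQ rip; simp

lemma QQ_neg {n : ℕ} (w : Fin n → ℂ) : QQ (-w) = QQ w := by
  unfold QQ; simp

lemma rip_self {n : ℕ} (w : Fin n → ℂ) : rip w w = QQ w := by
  unfold QQ rip; simp [Complex.normSq_apply]

open Filter Topology in
lemma exists_strict_point {n : ℕ} {Ω : Set (Fin n → ℂ)} (hΩo : IsOpen Ω)
    (hΩb : Bornology.IsBounded Ω) {z0 : Fin n → ℂ} (hz0 : z0 ∈ Ω)
    {u : (Fin n → ℂ) → ℝ} (hu : ContDiffOn ℝ (⊤ : ℕ∞) u Ω)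
    (hblow : ∀ p ∈ frontier Ω, Filter.Tendsto u (nhdsWithin p Ω) Filter.atTop) :
    ∃ z ∈ Ω, ∀ w, 2 * QQ w ≤ fderiv ℝ (fderiv ℝ u) z w w := by
  obtain ⟨B, hB⟩ := hΩb.isCompact_closure.bddAbove_image (f := QQ) QQ_cont.continuousOn
  have hB' : ∀ z ∈ Ω, QQ z ≤ B := fun z hz => hB ⟨z, subset_closure hz, rfl⟩
  set K : Set (Fin n → ℂ) := {z | z ∈ Ω ∧ u z ≤ u z0 + B} with hK
  have hB0 : 0 ≤ B := (QQ_nonneg z0).trans (hB' z0 hz0)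
  obtain ⟨p, hp, hmin⟩ := (sublevel_compact hΩo hΩb hu hblow (u z0 + B)).exists_isMaxOn
      ⟨z0, hz0, by linarith⟩ (f := fun z => QQ z - u z)
      (QQ_cont.continuousOn.sub (hu.continuousOn.mono fun z hz => hz.1))
  have hz0K : z0 ∈ K := ⟨hz0, by linarith⟩
  have hglob : ∀ z ∈ Ω, QQ z - u z ≤ QQ p - u p := by
    intro z hz
    by_cases h : u z ≤ u z0 + B
    · exact hmin ⟨hz, h⟩
    · push Not at h
      have h1 : QQ z0 - u z0 ≤ QQ p - u p := hmin hz0K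
      have := hB' z hz
      have := QQ_nonneg z0
      linarith
  refine ⟨p, hp.1, fun w => ?_⟩
  have hmax : IsLocalMax (fun s : ℝ => QQ (p + s • w) - u (p + s • w)) 0 := by
    filter_upwards [line_nhds hΩo hp.1 w] with s hs
    simpa using hglob _ hs
  have h1 : ∀ᶠ s in 𝓝 (0:ℝ), HasDerivAt (fun s : ℝ => QQ (p + s • w) - u (p + s • w))
      ((fun s : ℝ => (2 * rip p w + 2 * s * QQ w) - fderiv ℝ u (p + s • w) w) s) s := by
    filter_upwards [line_nhds hΩo hp.1 w] with s hs
    exact (QQ_line_d1 p w s).sub (line_d1 hΩo hu hs)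
  have h2 : HasDerivAt (fun s : ℝ => (2 * rip p w + 2 * s * QQ w) - fderiv ℝ u (p + s • w) w)
      (2 * QQ w - fderiv ℝ (fderiv ℝ u) (p + (0:ℝ) • w) w w) 0 := by
    refine HasDerivAt.sub ?_ (line_d2 hΩo hu (by simpa using hp.1))
    have := (((hasDerivAt_id (0:ℝ)).const_mul 2).mul_const (QQ w)).const_add (2 * rip p w)
    simpa using this
  have := second_deriv_nonpos h1 h2 hmax
  simp only [zero_smul, add_zero] at this
  linarith

lemma seg_convex {n : ℕ} {Ω : Set (Fin n → ℂ)} (hΩo : IsOpen Ω)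
    {u : (Fin n → ℂ) → ℝ} (hu : ContDiffOn ℝ (⊤ : ℕ∞) u Ω) {m v : Fin n → ℂ}
    (h : ∀ s ∈ Set.Icc (-1:ℝ) 1, m + s • v ∈ Ω ∧
      QQ v ≤ fderiv ℝ (fderiv ℝ u) (m + s • v) v v) :
    2 * u m + QQ v ≤ u (m + v) + u (m - v) := by
  set g : ℝ → ℝ := fun s => u (m + s • v) - s ^ 2 * QQ v / 2 with hg
  have hg1 : ∀ s ∈ Set.Icc (-1:ℝ) 1, HasDerivAt g (fderiv ℝ u (m + s • v) v - s * QQ v) s := by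
    intro s hs
    have h1 := (((hasDerivAt_id s).pow 2).mul_const (QQ v)).div_const 2
    exact ((line_d1 hΩo hu (h s hs).1).sub h1).congr_deriv (by simp; ring)
  have hg2 : ∀ s ∈ Set.Icc (-1:ℝ) 1, HasDerivAt (fun s => fderiv ℝ u (m + s • v) v - s * QQ v)
      (fderiv ℝ (fderiv ℝ u) (m + s • v) v v - QQ v) s := by
    intro s hs
    have h1 := (hasDerivAt_id s).mul_const (QQ v)
    exact ((line_d2 hΩo hu (h s hs).1).sub h1).congr_deriv (by simp)
  have hc : ConvexOn ℝ (Set.Icc (-1:ℝ) 1) g := by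
    refine convexOn_of_hasDerivWithinAt2_nonneg (convex_Icc _ _)
      (fun s hs => (hg1 s hs).continuousAt.continuousWithinAt)
      (fun s hs => (hg1 s (interior_subset hs)).hasDerivWithinAt)
      (fun s hs => (hg2 s (interior_subset hs)).hasDerivWithinAt)
      (fun s hs => by linarith [(h s (interior_subset hs)).2])
  have := hc.2 (by simp : (-1:ℝ) ∈ Set.Icc (-1:ℝ) 1) (by simp : (1:ℝ) ∈ Set.Icc (-1:ℝ) 1)
    (by norm_num : (0:ℝ) ≤ 1/2) (by norm_num : (0:ℝ) ≤ 1/2) (by norm_num)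
  simp [hg, ← sub_eq_add_neg] at this
  linarith

lemma halving {n : ℕ} {Ω : Set (Fin n → ℂ)} (hΩc : Convex ℝ Ω) {u : (Fin n → ℂ) → ℝ}
    (hmc : ∀ x ∈ Ω, ∀ y ∈ Ω, u ((1/2 : ℝ) • (x + y)) ≤ u x / 2 + u y / 2)
    {m : Fin n → ℂ} (hm : m ∈ Ω) {δ : ℝ}
    (h0 : ∀ v, ‖v‖ < δ → 2 * u m + QQ v ≤ u (m + v) + u (m - v)) (k : ℕ) :
    ∀ v, ‖v‖ < 2 ^ k * δ → m + v ∈ Ω → m - v ∈ Ω →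
      2 * u m + (1/2) ^ k * QQ v ≤ u (m + v) + u (m - v) := by
  induction k with
  | zero => intro v hv _ _; simpa using h0 v (by simpa using hv)
  | succ k ih =>
    intro v hv h1 h2
    have e1 : (1/2 : ℝ) • (m + (m + v)) = m + (1/2:ℝ) • v := by module
    have e2 : (1/2 : ℝ) • (m + (m - v)) = m - (1/2:ℝ) • v := by module
    have a1 := hmc m hm _ h1
    have a2 := hmc m hm _ h2
    rw [e1] at a1
    rw [e2] at a2
    have b1 : m + (1/2:ℝ) • v ∈ Ω := by
      rw [← e1, smul_add]; exact hΩc hm h1 (by norm_num) (by norm_num) (by norm_num)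
    have b2 : m - (1/2:ℝ) • v ∈ Ω := by
      rw [← e2, smul_add]; exact hΩc hm h2 (by norm_num) (by norm_num) (by norm_num)
    have := ih ((1/2:ℝ) • v) (by
      rw [norm_smul]; norm_num; rw [pow_succ] at hv; linarith) b1 b2
    rw [QQ_smul] at this
    rw [pow_succ]
    linarith

open Filter Topology in
lemma good_nonempty {n : ℕ} {Ω : Set (Fin n → ℂ)} (hΩo : IsOpen Ω)
    (hΩb : Bornology.IsBounded Ω) (hΩc : Convex ℝ Ω) {z0 : Fin n → ℂ} (hz0 : z0 ∈ Ω)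
    {u : (Fin n → ℂ) → ℝ} (hu : ContDiffOn ℝ (⊤ : ℕ∞) u Ω)
    (hblow : ∀ p ∈ frontier Ω, Filter.Tendsto u (nhdsWithin p Ω) Filter.atTop)
    (hmc : ∀ x ∈ Ω, ∀ y ∈ Ω, u ((1/2 : ℝ) • (x + y)) ≤ u x / 2 + u y / 2) :
    ∃ z ∈ Ω, GoodAt Ω u z := by
  obtain ⟨z, hz, hD⟩ := exists_strict_point hΩo hΩb hz0 hu hblow
  have hc : ContinuousAt (fderiv ℝ (fderiv ℝ u)) z :=
    (aux_hess_cont hΩo hu).continuousAt (hΩo.mem_nhds hz)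
  obtain ⟨r1, hr1, hb1⟩ := (Metric.continuousAt_iff (f := fderiv ℝ (fderiv ℝ u))).1 (by exact hc) 1 one_pos
  obtain ⟨r2, hr2, hb2⟩ := Metric.isOpen_iff.1 hΩo z hz
  set δ := min r1 r2 / 2 with hδ
  have hδ0 : 0 < δ := by have := lt_min hr1 hr2; linarith
  have hball : ∀ y, dist y z < 2 * δ → y ∈ Ω ∧ ∀ w, QQ w ≤ fderiv ℝ (fderiv ℝ u) y w w := by
    intro y hy
    have hy1 : dist y z < r1 := by have := min_le_left r1 r2; linarith
    have hy2 : dist y z < r2 := by have := min_le_right r1 r2; linarith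
    refine ⟨hb2 hy2, fun w => ?_⟩
    have h1 : ‖fderiv ℝ (fderiv ℝ u) y - fderiv ℝ (fderiv ℝ u) z‖ < 1 := by
      refine lt_of_eq_of_lt ?_ (hb1 hy1)
      exact (dist_eq_norm (fderiv ℝ (fderiv ℝ u) y) (fderiv ℝ (fderiv ℝ u) z)).symm
    have h2 : ‖(fderiv ℝ (fderiv ℝ u) y - fderiv ℝ (fderiv ℝ u) z) w w‖ ≤ ‖w‖ ^ 2 := by
      calc _ ≤ ‖fderiv ℝ (fderiv ℝ u) y - fderiv ℝ (fderiv ℝ u) z‖ * ‖w‖ * ‖w‖ :=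
            ContinuousLinearMap.le_opNorm₂ _ _ _
        _ ≤ 1 * ‖w‖ * ‖w‖ := by gcongr
        _ = ‖w‖ ^ 2 := by ring
    have h3 := norm_sq_le_QQ w
    have h4 := hD w
    rw [Real.norm_eq_abs, abs_le] at h2
    have h5 : (fderiv ℝ (fderiv ℝ u) y - fderiv ℝ (fderiv ℝ u) z) w w =
      fderiv ℝ (fderiv ℝ u) y w w - fderiv ℝ (fderiv ℝ u) z w w := rfl
    rw [h5] at h2
    linarith [h2.1]
  obtain ⟨R, hR⟩ := hΩb.exists_norm_le
  obtain ⟨k, hk⟩ := pow_unbounded_of_one_lt ((2 * R + 1) / δ) (by norm_num : (1:ℝ) < 2)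
  rw [div_lt_iff₀ hδ0] at hk
  refine ⟨z, hz, (1/2) ^ k, by positivity, ?_⟩
  filter_upwards [Metric.ball_mem_nhds z hδ0] with m hm v h1 h2
  rw [Metric.mem_ball] at hm
  have hmΩ : m ∈ Ω := (hball m (by linarith)).1
  refine halving hΩc hmc hmΩ (δ := δ) ?_ k v ?_ h1 h2
  · intro v hv
    refine seg_convex hΩo hu fun s hs => ?_
    have hd : dist (m + s • v) z < 2 * δ := by
      have : dist (m + s • v) m ≤ ‖v‖ := by
        rw [dist_eq_norm, add_sub_cancel_left, norm_smul, Real.norm_eq_abs]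
        have : |s| ≤ 1 := abs_le.2 hs
        nlinarith [norm_nonneg v]
      have := dist_triangle (m + s • v) m z
      linarith
    exact ⟨(hball _ hd).1, (hball _ hd).2 v⟩
  · have : v = (m + v) - m := by simp
    rw [this]
    have a := norm_sub_le (m + v) m
    have b := hR _ h1
    have c := hR _ hmΩ
    linarith

lemma rip_smul {n : ℕ} (d v : Fin n → ℂ) (c : ℝ) : rip d (c • v) = c * rip d v := by
  unfold rip
  rw [Finset.mul_sum]
  refine Finset.sum_congr rfl fun k _ => ?_
  simp; ring

lemma leviF_smul {n : ℕ} (u : (Fin n → ℂ) → ℝ) (z v : Fin n → ℂ) (c : ℝ) :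
    leviF u z (c • v) = c ^ 2 * leviF u z v := by
  unfold leviF
  rw [smul_comm Complex.I c v]
  simp only [map_smul, _root_.smul_apply, smul_eq_mul]
  ring

lemma leviF_pos {n : ℕ} {Ω : Set (Fin n → ℂ)} (hΩo : IsOpen Ω)
    {u : (Fin n → ℂ) → ℝ} (hu : ContDiffOn ℝ (⊤ : ℕ∞) u Ω)
    (hpsh : ∀ z ∈ Ω, (hessA u z).PosDef) {z : Fin n → ℂ} (hz : z ∈ Ω) {v : Fin n → ℂ}
    (hv : v ≠ 0) : 0 < leviF u z v := by
  have hs : star v ≠ 0 := by simpa using hv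
  have h := (hpsh z hz).dotProduct_mulVec_pos hs
  rw [form_A hΩo hu hz, star_star] at h
  have : 0 < leviF u z v / 4 := by exact_mod_cast h
  linarith

lemma levi_upper {n : ℕ} {Ω K : Set (Fin n → ℂ)} (hΩo : IsOpen Ω)
    {u : (Fin n → ℂ) → ℝ} (hu : ContDiffOn ℝ (⊤ : ℕ∞) u Ω) (hK : IsCompact K) (hKΩ : K ⊆ Ω) :
    ∃ Λ : ℝ, 0 < Λ ∧ ∀ z ∈ K, ∀ v, leviF u z v ≤ 4 * Λ * QQ v := by
  obtain ⟨C, hC⟩ := hK.exists_bound_of_continuousOn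
    (f := fderiv ℝ (fderiv ℝ u)) (by exact (aux_hess_cont hΩo hu).mono hKΩ)
  refine ⟨|C| + 1, by positivity, fun z hz v => ?_⟩
  have h : ∀ w, fderiv ℝ (fderiv ℝ u) z w w ≤ |C| * QQ w := by
    intro w
    calc fderiv ℝ (fderiv ℝ u) z w w ≤ ‖fderiv ℝ (fderiv ℝ u) z w w‖ := Real.le_norm_self _
      _ ≤ ‖fderiv ℝ (fderiv ℝ u) z‖ * ‖w‖ * ‖w‖ := ContinuousLinearMap.le_opNorm₂ _ _ _
      _ ≤ |C| * ‖w‖ * ‖w‖ := by gcongr; exact (hC z hz).trans (le_abs_self C)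
      _ = |C| * ‖w‖ ^ 2 := by ring
      _ ≤ _ := by gcongr; exact norm_sq_le_QQ w
  have h1 := h v
  have h2 := h (Complex.I • v)
  rw [QQ_I] at h2
  unfold leviF
  nlinarith [QQ_nonneg v, abs_nonneg C, mul_nonneg (abs_nonneg C) (QQ_nonneg v)]

lemma levi_lower {n : ℕ} {Ω K : Set (Fin n → ℂ)} (hΩo : IsOpen Ω)
    {u : (Fin n → ℂ) → ℝ} (hu : ContDiffOn ℝ (⊤ : ℕ∞) u Ω)
    (hpsh : ∀ z ∈ Ω, (hessA u z).PosDef) (hK : IsCompact K) (hKΩ : K ⊆ Ω) :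
    ∃ μ : ℝ, 0 < μ ∧ ∀ z ∈ K, ∀ v, 4 * μ * QQ v ≤ leviF u z v := by
  set S : Set (Fin n → ℂ) := {v | QQ v = 1} with hS
  have hSc : IsCompact S := by
    refine Metric.isCompact_of_isClosed_isBounded (isClosed_eq QQ_cont continuous_const) ?_
    refine (Metric.isBounded_closedBall (x := (0 : Fin n → ℂ)) (r := 1)).subset fun v hv => ?_
    have hv : QQ v = 1 := hv
    have := norm_sq_le_QQ v
    rw [hv] at this
    rw [mem_closedBall_zero_iff]
    nlinarith [norm_nonneg v]
  have hcont : ContinuousOn (fun p : (Fin n → ℂ) × (Fin n → ℂ) => leviF u p.1 p.2) (K ×ˢ S) := by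
    have hD : ContinuousOn (fun p : (Fin n → ℂ) × (Fin n → ℂ) => fderiv ℝ (fderiv ℝ u) p.1)
        (K ×ˢ S) := (aux_hess_cont hΩo hu).comp continuous_fst.continuousOn
          fun p hp => hKΩ hp.1
    have h2 : ContinuousOn (fun p : (Fin n → ℂ) × (Fin n → ℂ) => p.2) (K ×ˢ S) :=
      continuous_snd.continuousOn
    have h3 : ContinuousOn (fun p : (Fin n → ℂ) × (Fin n → ℂ) => Complex.I • p.2) (K ×ˢ S) :=
      (by fun_prop : Continuous fun p : (Fin n → ℂ) × (Fin n → ℂ) =>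
        Complex.I • p.2).continuousOn
    exact ((hD.clm_apply h2).clm_apply h2).add ((hD.clm_apply h3).clm_apply h3)
  obtain ⟨μ, hμ, hmin⟩ : ∃ μ : ℝ, 0 < μ ∧ ∀ z ∈ K, ∀ v ∈ S, 4 * μ ≤ leviF u z v := by
    by_cases hne : (K ×ˢ S).Nonempty
    · obtain ⟨p, hp, hm⟩ := (hK.prod hSc).exists_isMinOn hne hcont
      refine ⟨leviF u p.1 p.2 / 4, ?_, fun z hz v hv => ?_⟩
      · have : p.2 ≠ 0 := by
          intro h0
          have h1 : QQ p.2 = 1 := hp.2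
          rw [(QQ_zero_iff _).2 h0] at h1
          norm_num at h1
        have := leviF_pos hΩo hu hpsh (hKΩ hp.1) this
        linarith
      · have : leviF u p.1 p.2 ≤ leviF u z v := hm (show (z, v) ∈ K ×ˢ S from ⟨hz, hv⟩)
        linarith
    · exact ⟨1, one_pos, fun z hz v hv => absurd ⟨(z, v), hz, hv⟩ hne⟩
  refine ⟨μ, hμ, fun z hz v => ?_⟩
  by_cases hv : v = 0
  · subst hv
    have : QQ (0 : Fin n → ℂ) = 0 := (QQ_zero_iff _).2 rfl
    simp [this, leviF]
  · have hq : 0 < QQ v := lt_of_le_of_ne (QQ_nonneg v) fun h => hv ((QQ_zero_iff v).1 h.symm)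
    have hs : 0 < Real.sqrt (QQ v) := Real.sqrt_pos.2 hq
    have hsq : Real.sqrt (QQ v) ^ 2 = QQ v := Real.sq_sqrt hq.le
    have h1 := hmin z hz ((Real.sqrt (QQ v))⁻¹ • v) (by
      change QQ _ = 1
      rw [QQ_smul, inv_pow, hsq, inv_mul_cancel₀ hq.ne'])
    rw [leviF_smul, inv_pow, hsq] at h1
    calc 4 * μ * QQ v ≤ (QQ v)⁻¹ * leviF u z v * QQ v := by gcongr
      _ = leviF u z v := by field_simp

lemma barrier_deriv (ε α eR M r W D p ν : ℝ) :
    ∃ j' : ℝ → ℝ,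
      (∀ s, HasDerivAt (fun s => ε * (Real.exp (-(α * (M + 2 * s * r + s ^ 2 * W))) - eR) *
        (D + 4 * ν * s * p + 4 * ν ^ 2 * s ^ 2 * W)) (j' s) s) ∧
      HasDerivAt j' (ε * (Real.exp (-(α * M)) * (4 * α ^ 2 * r ^ 2 - 2 * α * W) * D
        - 16 * ν * α * Real.exp (-(α * M)) * r * p
        + 8 * ν ^ 2 * (Real.exp (-(α * M)) - eR) * W)) 0 := by
  have hq : ∀ s : ℝ, HasDerivAt (fun s => -(α * (M + 2 * s * r + s ^ 2 * W)))
      (-(α * (2 * r + 2 * s * W))) s := by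
    intro s
    have h1 := (((hasDerivAt_id s).const_mul 2).mul_const r).const_add M
    have h2 := ((hasDerivAt_id s).pow 2).mul_const W
    exact (((h1.add h2).const_mul α).neg).congr_deriv (by simp)
  have hQ : ∀ s : ℝ, HasDerivAt (fun s => D + 4 * ν * s * p + 4 * ν ^ 2 * s ^ 2 * W)
      (4 * ν * p + 8 * ν ^ 2 * s * W) s := by
    intro s
    have h1 := (((hasDerivAt_id s).const_mul (4 * ν)).mul_const p).const_add D
    have h2 := (((hasDerivAt_id s).pow 2).const_mul (4 * ν ^ 2)).mul_const W
    exact (h1.add h2).congr_deriv (by simp only [id]; norm_num; ring_nf; simp)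
  have hE := fun s => (hq s).exp
  have hq' : ∀ s : ℝ, HasDerivAt (fun s => -(α * (2 * r + 2 * s * W))) (-(α * (2 * W))) s := by
    intro s
    have h1 := (((hasDerivAt_id s).const_mul 2).mul_const W).const_add (2 * r)
    exact ((h1.const_mul α).neg).congr_deriv (by simp)
  have hQ' : ∀ s : ℝ, HasDerivAt (fun s => 4 * ν * p + 8 * ν ^ 2 * s * W) (8 * ν ^ 2 * W) s := by
    intro s
    have h1 := (((hasDerivAt_id s).const_mul (8 * ν ^ 2)).mul_const W).const_add (4 * ν * p)
    exact h1.congr_deriv (by simp)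
  have hE' := fun s => (hE s).mul (hq' s)
  refine ⟨_, fun s => (((hE s).sub_const eR).const_mul ε).mul (hQ s), ?_⟩
  refine ((((hE' 0).const_mul ε).mul (hQ 0)).add
    ((((hE 0).sub_const eR).const_mul ε).mul (hQ' 0))).congr_deriv ?_
  simp
  ring

lemma scalar_step {ε α e M D W ν h r1 r2 p1 p2 T : ℝ} (hε : 0 ≤ ε)
    (he : 0 ≤ e) (he1 : e ≤ 1) (hM : 0 ≤ M) (hD : 0 ≤ D) (hW : 0 ≤ W) (hh : 0 ≤ h)
    (hr1 : r1 ^ 2 ≤ M * W) (hr2 : r2 ^ 2 ≤ M * W) (hp1 : p1 ^ 2 ≤ D * W) (hp2 : p2 ^ 2 ≤ D * W)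
    (hT : T ≤ - ν ^ 2 / 2 - (ε * (e * (4 * α ^ 2 * r1 ^ 2 - 2 * α * W) * D
        - 16 * ν * α * e * r1 * p1 + 8 * ν ^ 2 * h * W) +
        ε * (e * (4 * α ^ 2 * r2 ^ 2 - 2 * α * W) * D
        - 16 * ν * α * e * r2 * p2 + 8 * ν ^ 2 * h * W)) / 4) :
    T ≤ ε * e * D * (-(α ^ 2 * (r1 ^ 2 + r2 ^ 2)) + α * W + 32 * ε * α ^ 2 * M * W ^ 2) := by
  set X := r1 * p1 + r2 * p2 with hX
  have hMW : 0 ≤ M * W := by positivity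
  have hDW : 0 ≤ D * W := by positivity
  have hX2 : X ^ 2 ≤ 4 * M * D * W ^ 2 := by
    have a1 : r1 ^ 2 * p1 ^ 2 ≤ (M * W) * (D * W) := mul_le_mul hr1 hp1 (sq_nonneg _) hMW
    have a2 : r2 ^ 2 * p2 ^ 2 ≤ (M * W) * (D * W) := mul_le_mul hr2 hp2 (sq_nonneg _) hMW
    nlinarith [sq_nonneg (r1 * p1 - r2 * p2)]
  have h1 : -ν ^ 2 / 2 + 4 * ε * α * e * ν * X ≤ 8 * ε ^ 2 * α ^ 2 * e ^ 2 * X ^ 2 := by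
    nlinarith [sq_nonneg (ν - 4 * ε * α * e * X)]
  have h2 : 8 * ε ^ 2 * α ^ 2 * e ^ 2 * X ^ 2 ≤ 8 * ε ^ 2 * α ^ 2 * e * (4 * M * D * W ^ 2) := by
    have : e ^ 2 ≤ e := by nlinarith
    gcongr
  have h3 : 0 ≤ 4 * ε * ν ^ 2 * h * W := by positivity
  calc T ≤ _ := hT
    _ = (-ν ^ 2 / 2 + 4 * ε * α * e * ν * X) - ε * e * D * (α ^ 2 * (r1 ^ 2 + r2 ^ 2) - α * W)
        - 4 * ε * ν ^ 2 * h * W := by rw [hX]; ring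
    _ ≤ 8 * ε ^ 2 * α ^ 2 * e * (4 * M * D * W ^ 2)
        - ε * e * D * (α ^ 2 * (r1 ^ 2 + r2 ^ 2) - α * W) := by linarith
    _ = _ := by ring

/-- The two-point function with barrier. -/
def PhiB {n : ℕ} (u : (Fin n → ℂ) → ℝ) (zs : Fin n → ℂ) (α ε R2 : ℝ)
    (x y : Fin n → ℂ) : ℝ :=
  u ((1/2 : ℝ) • (x + y)) - u x / 2 - u y / 2 +
    ε * (Real.exp (-(α * QQ ((1/2 : ℝ) • (x + y) - zs))) - Real.exp (-(α * R2))) * QQ (x - y)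

open Filter Topology in
lemma max_contra {n : ℕ} {Ω : Set (Fin n → ℂ)} (hΩo : IsOpen Ω)
    {u : (Fin n → ℂ) → ℝ} (hu : ContDiffOn ℝ (⊤ : ℕ∞) u Ω)
    (hpsh : ∀ z ∈ Ω, (hessA u z).PosDef)
    (hKE : ∀ z ∈ Ω, (hessA u z).det = (Real.exp ((n + 1) * u z) : ℂ))
    {x y zs m : Fin n → ℂ} (hx : x ∈ Ω) (hy : y ∈ Ω) (hm : m = (1/2 : ℝ) • (x + y)) (hmΩ : m ∈ Ω)
    {α ε R2 ρ μ Λ : ℝ} (hα : 0 ≤ α) (hε : 0 < ε) (hμ : 0 < μ) (hΛ : 0 < Λ)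
    (hρ : ρ ≤ QQ (m - zs)) (hR2 : QQ (m - zs) < R2) (hD : 0 < QQ (x - y))
    (hΦ : 0 < PhiB u zs α ε R2 x y)
    (hmax : ∀ x' ∈ Ω, ∀ y' ∈ Ω, QQ ((1/2 : ℝ) • (x' + y') - zs) ≤ R2 →
      PhiB u zs α ε R2 x' y' ≤ PhiB u zs α ε R2 x y)
    (hμx : ∀ v, 4 * μ * QQ v ≤ leviF u x v) (hμy : ∀ v, 4 * μ * QQ v ≤ leviF u y v)
    (hΛx : ∀ v, leviF u x v ≤ 4 * Λ * QQ v) (hΛy : ∀ v, leviF u y v ≤ 4 * Λ * QQ v)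
    (hnum : (n + 1) + α * (n / μ) + 32 * ε * α ^ 2 * R2 * (n / μ ^ 2) ≤ α ^ 2 * (ρ * μ / Λ ^ 2)) :
    False := by
  obtain ⟨w, κ, hκ, hwx, hwy, hq, hfin⟩ := key_ineq hΩo hu hpsh hKE hx hy hmΩ 1 one_pos
  set M := QQ (m - zs) with hMdef
  set D := QQ (x - y) with hDdef
  set e := Real.exp (-(α * M)) with he
  set eR := Real.exp (-(α * R2)) with heR
  have hM0 : 0 ≤ M := QQ_nonneg _
  have he0 : 0 < e := Real.exp_pos _
  have he1 : e ≤ 1 := by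
    rw [he, Real.exp_le_one_iff]; have := mul_nonneg hα hM0; linarith
  have heRe : eR ≤ e := by
    rw [he, heR, Real.exp_le_exp]; have := mul_le_mul_of_nonneg_left hR2.le hα; linarith
  have heR0 : 0 < eR := Real.exp_pos _
  -- the local maximum condition
  have hloc : ∀ (v : Fin n → ℂ) (ν : ℝ), fderiv ℝ (fderiv ℝ u) m ((1:ℝ) • v) ((1:ℝ) • v) ≤
      fderiv ℝ (fderiv ℝ u) x ((1 + ν) • v) ((1 + ν) • v) / 2
      + fderiv ℝ (fderiv ℝ u) y ((1 - ν) • v) ((1 - ν) • v) / 2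
      - (ε * (e * (4 * α ^ 2 * rip (m - zs) v ^ 2 - 2 * α * QQ v) * D
        - 16 * ν * α * e * rip (m - zs) v * rip (x - y) v + 8 * ν ^ 2 * (e - eR) * QQ v)) := by
    intro v ν
    obtain ⟨j', hj1, hj2⟩ := barrier_deriv ε α eR M (rip (m - zs) v) (QQ v) D (rip (x - y) v) ν
    refine max_cond hΩo hu hx hy hmΩ _ _ _ hj1 hj2 ?_
    have hc : ∀ᶠ s in 𝓝 (0:ℝ), QQ ((m - zs) + s • v) < R2 := by
      have hcc : Continuous fun s : ℝ => QQ ((m - zs) + s • v) := QQ_cont.comp (by fun_prop)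
      have := hcc.tendsto 0
      simp only [zero_smul, add_zero] at this
      exact this.eventually (gt_mem_nhds hR2)
    filter_upwards [line_nhds hΩo hx ((1 + ν) • v), line_nhds hΩo hy ((1 - ν) • v), hc]
      with s h1 h2 h3
    have e1 : (1/2 : ℝ) • ((x + s • (1 + ν) • v) + (y + s • (1 - ν) • v)) = m + s • (1:ℝ) • v := by
      rw [hm]; module
    have e2 : (x + s • (1 + ν) • v) - (y + s • (1 - ν) • v) = (x - y) + s • (2 * ν) • v := by
      module
    have e3 : m + s • (1:ℝ) • v - zs = (m - zs) + s • v := by module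
    have := hmax _ h1 _ h2 (by rw [e1, e3]; exact h3.le)
    unfold PhiB at this
    rw [e1, e2, e3, QQ_line, QQ_line, rip_smul, QQ_smul, ← hm, ← hMdef, ← hDdef] at this
    simp only [zero_smul, add_zero]
    refine le_trans (le_of_eq ?_) (this.trans (le_of_eq ?_))
    · ring
    · simp [heR]
  have hstep : ∀ i, (1:ℝ) ^ 2 * leviF u m (w i) / 4 - 1 ≤
      ε * e * D * (-(α ^ 2 * (rip (m - zs) (w i) ^ 2 + rip (m - zs) (Complex.I • w i) ^ 2))
        + α * QQ (w i) + 32 * ε * α ^ 2 * M * QQ (w i) ^ 2) := by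
    intro i
    have h := levi_step (hκ i) rfl (hwx i) (hwy i) (hloc (w i) _) (hloc (Complex.I • w i) _)
    rw [QQ_I] at h
    refine scalar_step hε.le he0.le he1 hM0 hD.le (QQ_nonneg _) (sub_nonneg.2 heRe)
      (rip_sq_le _ _) ?_ (rip_sq_le _ _) ?_ h
    · have := rip_sq_le (m - zs) (Complex.I • w i); rwa [QQ_I] at this
    · have := rip_sq_le (x - y) (Complex.I • w i); rwa [QQ_I] at this
  have hW : ∀ i, QQ (w i) ≤ 1 / μ := by
    intro i
    have a := hμx (w i)
    have b := hμy (w i)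
    rw [hwx i] at a
    rw [hwy i] at b
    rw [le_div_iff₀ hμ]
    rcases le_total (κ i) 1 with h | h
    · linarith
    · have := inv_le_one_of_one_le₀ h
      linarith
  have hκΛ : ∀ i, κ i ≤ Λ / μ := by
    intro i
    have b := hΛy (w i)
    rw [hwy i] at b
    calc κ i ≤ Λ * QQ (w i) := by linarith
      _ ≤ Λ * (1 / μ) := by gcongr; exact hW i
      _ = _ := by ring
  set q : Fin n → ℝ := fun i => rip (m - zs) (w i) ^ 2 + rip (m - zs) (Complex.I • w i) ^ 2 with hqd
  have hq0 : ∀ i, 0 ≤ q i := fun i => by positivity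
  have hqs : M ≤ Λ ^ 2 / μ * ∑ i, q i := by
    calc M ≤ Λ * ∑ i, κ i * q i := hq Λ hΛ hΛx (m - zs)
      _ ≤ Λ * ∑ i, Λ / μ * q i := by
          gcongr with i _
          exact hκΛ i
      _ = _ := by rw [← Finset.mul_sum]; ring
  have hqs' : ρ * μ / Λ ^ 2 ≤ ∑ i, q i := by
    rw [div_le_iff₀ (by positivity)]
    calc ρ * μ ≤ M * μ := by gcongr
      _ ≤ (Λ ^ 2 / μ * ∑ i, q i) * μ := by gcongr
      _ = _ := by field_simp
  have hWs : ∑ i, QQ (w i) ≤ n / μ := by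
    calc ∑ i, QQ (w i) ≤ ∑ _i : Fin n, 1 / μ := Finset.sum_le_sum fun i _ => hW i
      _ = _ := by simp; ring
  have hWs2 : ∑ i, QQ (w i) ^ 2 ≤ n / μ ^ 2 := by
    calc ∑ i, QQ (w i) ^ 2 ≤ ∑ _i : Fin n, (1 / μ) ^ 2 :=
          Finset.sum_le_sum fun i _ => pow_le_pow_left₀ (QQ_nonneg _) (hW i) 2
      _ = _ := by simp; ring
  have hWs20 : 0 ≤ ∑ i, QQ (w i) ^ 2 := Finset.sum_nonneg fun i _ => sq_nonneg _
  have hsum : ∑ i, ((1:ℝ) ^ 2 * leviF u m (w i) / 4 - 1) ≤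
      ε * e * D * (-(α ^ 2 * ∑ i, q i) + α * ∑ i, QQ (w i)
        + 32 * ε * α ^ 2 * M * ∑ i, QQ (w i) ^ 2) := by
    refine (Finset.sum_le_sum fun i _ => hstep i).trans (le_of_eq ?_)
    rw [← Finset.mul_sum, Finset.sum_add_distrib, Finset.sum_add_distrib, Finset.sum_neg_distrib,
      ← Finset.mul_sum, ← Finset.mul_sum, ← Finset.mul_sum]
  have hbr : -(α ^ 2 * ∑ i, q i) + α * ∑ i, QQ (w i)
        + 32 * ε * α ^ 2 * M * ∑ i, QQ (w i) ^ 2 ≤ -(n + 1) := by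
    have a1 : α ^ 2 * (ρ * μ / Λ ^ 2) ≤ α ^ 2 * ∑ i, q i := by gcongr
    have a2 : α * ∑ i, QQ (w i) ≤ α * (n / μ) := by gcongr
    have a3 : 32 * ε * α ^ 2 * M * ∑ i, QQ (w i) ^ 2 ≤ 32 * ε * α ^ 2 * R2 * (n / μ ^ 2) := by
      have hR20 : 0 ≤ R2 := hM0.trans hR2.le
      gcongr
    linarith
  have hfac : 0 < ε * e * D := by positivity
  have hbr2 := mul_le_mul_of_nonneg_left hbr hfac.le
  have hΦ' : 0 < u m - u x / 2 - u y / 2 + ε * (e - eR) * D := by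
    have := hΦ
    unfold PhiB at this
    rw [← hm] at this
    exact this
  rw [Real.log_one, mul_zero, add_zero] at hfin
  have hn0 : (0:ℝ) < n + 1 := by positivity
  have h5 : 0 < (n + 1) * (u m - u x / 2 - u y / 2 + ε * (e - eR) * D) := mul_pos hn0 hΦ'
  have h6 : 0 ≤ (n + 1) * (ε * eR * D) := by positivity
  nlinarith

set_option maxHeartbeats 4000000 in
open Filter Topology in
lemma propagate {n : ℕ} {Ω : Set (Fin n → ℂ)} (hΩo : IsOpen Ω)
    (hΩb : Bornology.IsBounded Ω)
    {u : (Fin n → ℂ) → ℝ} (hu : ContDiffOn ℝ (⊤ : ℕ∞) u Ω)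
    (hpsh : ∀ z ∈ Ω, (hessA u z).PosDef)
    (hKE : ∀ z ∈ Ω, (hessA u z).det = (Real.exp ((n + 1) * u z) : ℂ))
    (hblow : ∀ p ∈ frontier Ω, Filter.Tendsto u (nhdsWithin p Ω) Filter.atTop)
    (hmc : ∀ x ∈ Ω, ∀ y ∈ Ω, u ((1/2 : ℝ) • (x + y)) ≤ u x / 2 + u y / 2)
    {zs : Fin n → ℂ} (hgood : GoodAt Ω u zs) {R2 : ℝ}
    (hball : ∀ m, QQ (m - zs) ≤ R2 → m ∈ Ω) {m0 : Fin n → ℂ} (hm0 : QQ (m0 - zs) < R2) :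
    GoodAt Ω u m0 := by
  obtain ⟨ε1, hε1, hev⟩ := hgood
  obtain ⟨r, hr, hrb⟩ := Metric.eventually_nhds_iff.1 hev
  have hR2 : 0 < R2 := (QQ_nonneg _).trans_lt hm0
  -- compactness data
  obtain ⟨L, hL⟩ := bdd_below hΩo hΩb hu hblow
  set Bl : Set (Fin n → ℂ) := {m | QQ (m - zs) ≤ R2} with hBl
  have hBlc : IsCompact Bl := by
    refine Metric.isCompact_of_isClosed_isBounded
      (isClosed_le (QQ_cont.comp (continuous_id.sub continuous_const)) continuous_const)
      (hΩb.subset fun m hm => hball m hm)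
  obtain ⟨C1, hC1⟩ := hBlc.bddAbove_image (f := u) (hu.continuousOn.mono fun m hm => hball m hm)
  have hC1' : ∀ m, QQ (m - zs) ≤ R2 → u m ≤ C1 := fun m hm => hC1 ⟨m, hm, rfl⟩
  obtain ⟨B, hB⟩ := (hΩb.isCompact_closure.prod hΩb.isCompact_closure).bddAbove_image
    (f := fun p : (Fin n → ℂ) × (Fin n → ℂ) => QQ (p.1 - p.2))
    (QQ_cont.comp (continuous_fst.sub continuous_snd)).continuousOn
  have hB' : ∀ x ∈ Ω, ∀ y ∈ Ω, QQ (x - y) ≤ B := fun x hx y hy =>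
    hB ⟨(x, y), ⟨subset_closure hx, subset_closure hy⟩, rfl⟩
  set K : Set (Fin n → ℂ) := {z | z ∈ Ω ∧ u z ≤ 2 * C1 + 2 * B - L} with hK
  have hKc : IsCompact K := sublevel_compact hΩo hΩb hu hblow _
  have hKΩ : K ⊆ Ω := fun z hz => hz.1
  obtain ⟨Λ, hΛ, hΛK⟩ := levi_upper hΩo hu hKc hKΩ
  obtain ⟨μ, hμ, hμK⟩ := levi_lower hΩo hu hpsh hKc hKΩ
  -- constants
  have hn0 : (0:ℝ) ≤ n := Nat.cast_nonneg n
  set c0 : ℝ := r ^ 2 * μ / Λ ^ 2 with hc0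
  have hc0p : 0 < c0 := by positivity
  set α : ℝ := (n + 2 + n / μ) / c0 + 1 with hαd
  have hα1 : 1 ≤ α := by
    have : 0 ≤ (n + 2 + n / μ) / c0 := by positivity
    linarith
  have hαc : n + 2 + n / μ ≤ α * c0 := by
    rw [hαd, add_mul, div_mul_cancel₀ _ hc0p.ne']; linarith
  set G : ℝ := 32 * α ^ 2 * R2 * (n / μ ^ 2) with hG
  have hG0 : 0 ≤ G := by positivity
  set ε : ℝ := min (min 1 (ε1 / 8)) (1 / (G + 1)) with hεd
  have hε : 0 < ε := by
    refine lt_min (lt_min one_pos (by linarith)) (by positivity)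
  have hε_1 : ε ≤ 1 := (min_le_left _ _).trans (min_le_left _ _)
  have hε_2 : ε ≤ ε1 / 8 := (min_le_left _ _).trans (min_le_right _ _)
  have hε_3 : ε * G ≤ 1 := by
    calc ε * G ≤ 1 / (G + 1) * G := by gcongr; exact min_le_right _ _
      _ ≤ 1 := by rw [one_div, inv_mul_le_iff₀ (by positivity)]; linarith
  have hnum : (n + 1) + α * (n / μ) + 32 * ε * α ^ 2 * R2 * (n / μ ^ 2) ≤
      α ^ 2 * (r ^ 2 * μ / Λ ^ 2) := by
    have h1 : α * (n + 2 + n / μ) ≤ α * (α * c0) := by gcongr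
    have h2 : 32 * ε * α ^ 2 * R2 * (n / μ ^ 2) = ε * G := by rw [hG]; ring
    rw [h2, ← hc0]
    nlinarith
  -- bounds on the barrier
  have hbar : ∀ M, 0 ≤ M → Real.exp (-(α * M)) - Real.exp (-(α * R2)) ≤ 1 := by
    intro M hM
    have h1 : Real.exp (-(α * M)) ≤ 1 := by
      rw [Real.exp_le_one_iff]; have : 0 ≤ α * M := by positivity
      linarith
    have := Real.exp_pos (-(α * R2))
    linarith
  have hmid : ∀ x y : Fin n → ℂ, ∃ v, x = (1/2:ℝ) • (x + y) + v ∧ y = (1/2:ℝ) • (x + y) - v ∧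
      QQ (x - y) = 4 * QQ v := by
    intro x y
    refine ⟨(1/2:ℝ) • (x - y), by module, by module, ?_⟩
    rw [QQ_smul]; ring
  -- main claim
  have main : ∀ x ∈ Ω, ∀ y ∈ Ω, QQ ((1/2:ℝ) • (x + y) - zs) ≤ R2 → PhiB u zs α ε R2 x y ≤ 0 := by
    by_contra hcon
    push Not at hcon
    obtain ⟨x1, hx1, y1, hy1, hm1, hΦ1⟩ := hcon
    have hKK : ∀ x ∈ Ω, ∀ y ∈ Ω, QQ ((1/2:ℝ) • (x + y) - zs) ≤ R2 → 0 < PhiB u zs α ε R2 x y →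
        x ∈ K ∧ y ∈ K := by
      intro x hx y hy hm hp
      have a1 := hL _ hx
      have a2 := hL _ hy
      have a3 := hC1' _ hm
      have a4 : ε * (Real.exp (-(α * QQ ((1/2 : ℝ) • (x + y) - zs))) - Real.exp (-(α * R2)))
          * QQ (x - y) ≤ B := by
        have b1 := hbar _ (QQ_nonneg ((1/2 : ℝ) • (x + y) - zs))
        have b2 : ε * (Real.exp (-(α * QQ ((1/2 : ℝ) • (x + y) - zs))) - Real.exp (-(α * R2)))
          ≤ 1 := by nlinarith
        have b3 := QQ_nonneg (x - y)
        have b4 := hB' x hx y hy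
        nlinarith
      unfold PhiB at hp
      refine ⟨⟨hx, ?_⟩, ⟨hy, ?_⟩⟩ <;> linarith
    set S : Set ((Fin n → ℂ) × (Fin n → ℂ)) :=
      (K ×ˢ K) ∩ {p | QQ ((1/2:ℝ) • (p.1 + p.2) - zs) ≤ R2} with hS
    have hmc1 : Continuous fun p : (Fin n → ℂ) × (Fin n → ℂ) => (1/2:ℝ) • (p.1 + p.2) := by fun_prop
    have hmc2 : Continuous fun p : (Fin n → ℂ) × (Fin n → ℂ) => QQ ((1/2:ℝ) • (p.1 + p.2) - zs) :=
      QQ_cont.comp (hmc1.sub continuous_const)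
    have hmc3 : Continuous fun p : (Fin n → ℂ) × (Fin n → ℂ) => QQ (p.1 - p.2) :=
      QQ_cont.comp (continuous_fst.sub continuous_snd)
    have hSc : IsCompact S := (hKc.prod hKc).inter_right (isClosed_le hmc2 continuous_const)
    have hΦc : ContinuousOn (fun p : (Fin n → ℂ) × (Fin n → ℂ) => PhiB u zs α ε R2 p.1 p.2) S := by
      have h1 : ContinuousOn (fun p : (Fin n → ℂ) × (Fin n → ℂ) => u ((1/2:ℝ) • (p.1 + p.2))) S :=
        hu.continuousOn.comp hmc1.continuousOn fun p hp => hball _ hp.2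
      have h2 : ContinuousOn (fun p : (Fin n → ℂ) × (Fin n → ℂ) => u p.1) S :=
        hu.continuousOn.comp continuous_fst.continuousOn fun p hp => hp.1.1.1
      have h3 : ContinuousOn (fun p : (Fin n → ℂ) × (Fin n → ℂ) => u p.2) S :=
        hu.continuousOn.comp continuous_snd.continuousOn fun p hp => hp.1.2.1
      have h4 : Continuous (fun p : (Fin n → ℂ) × (Fin n → ℂ) =>
          ε * (Real.exp (-(α * QQ ((1/2 : ℝ) • (p.1 + p.2) - zs))) - Real.exp (-(α * R2)))
            * QQ (p.1 - p.2)) :=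
        (continuous_const.mul ((Real.continuous_exp.comp
          (continuous_const.mul hmc2).neg).sub continuous_const)).mul hmc3
      exact ((h1.sub (h2.div_const 2)).sub (h3.div_const 2)).add h4.continuousOn
    have hp1 : (x1, y1) ∈ S := ⟨hKK x1 hx1 y1 hy1 hm1 hΦ1, hm1⟩
    obtain ⟨⟨x, y⟩, hp, hmax⟩ := hSc.exists_isMaxOn ⟨_, hp1⟩ hΦc
    have hxK : x ∈ K := hp.1.1
    have hyK : y ∈ K := hp.1.2
    have hx : x ∈ Ω := hxK.1
    have hy : y ∈ Ω := hyK.1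
    have hm2 : QQ ((1/2:ℝ) • (x + y) - zs) ≤ R2 := hp.2
    have hge : PhiB u zs α ε R2 x1 y1 ≤ PhiB u zs α ε R2 x y := hmax hp1
    have hΦ : 0 < PhiB u zs α ε R2 x y := hΦ1.trans_le hge
    have hglob : ∀ x' ∈ Ω, ∀ y' ∈ Ω, QQ ((1/2 : ℝ) • (x' + y') - zs) ≤ R2 →
      PhiB u zs α ε R2 x' y' ≤ PhiB u zs α ε R2 x y := by
      intro x' hx' y' hy' hm'
      by_cases hq : 0 < PhiB u zs α ε R2 x' y'
      · exact hmax (show (x', y') ∈ S from ⟨hKK x' hx' y' hy' hm' hq, hm'⟩)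
      · push Not at hq; linarith
    have hcv := hmc x hx y hy
    have hpos : 0 < ε * (Real.exp (-(α * QQ ((1/2 : ℝ) • (x + y) - zs))) - Real.exp (-(α * R2)))
        * QQ (x - y) := by
      unfold PhiB at hΦ; linarith
    have hD : 0 < QQ (x - y) := by
      refine lt_of_le_of_ne (QQ_nonneg _) fun h => ?_
      rw [← h, mul_zero] at hpos
      exact lt_irrefl _ hpos
    have hh : 0 < Real.exp (-(α * QQ ((1/2 : ℝ) • (x + y) - zs))) - Real.exp (-(α * R2)) := by
      by_contra hneg
      push Not at hneg
      have := mul_nonpos_of_nonpos_of_nonneg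
        (mul_nonpos_of_nonneg_of_nonpos hε.le hneg) hD.le
      linarith
    have hlt : QQ ((1/2 : ℝ) • (x + y) - zs) < R2 := by
      have := Real.exp_lt_exp.1 (sub_pos.1 hh)
      nlinarith
    have hrM : r ^ 2 ≤ QQ ((1/2 : ℝ) • (x + y) - zs) := by
      by_contra hneg
      push Not at hneg
      have hd : dist ((1/2 : ℝ) • (x + y)) zs < r := by
        rw [dist_eq_norm]
        have := norm_sq_le_QQ ((1/2 : ℝ) • (x + y) - zs)
        exact lt_of_pow_lt_pow_left₀ 2 hr.le (by linarith)
      obtain ⟨v, hv1, hv2, hv3⟩ := hmid x y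
      have := hrb hd v (by rw [← hv1]; exact hx) (by rw [← hv2]; exact hy)
      rw [← hv1, ← hv2] at this
      have h5 : ε * (Real.exp (-(α * QQ ((1/2 : ℝ) • (x + y) - zs))) - Real.exp (-(α * R2)))
        * QQ (x - y) ≤ ε1 / 8 * QQ (x - y) := by
        have b1 := hbar _ (QQ_nonneg ((1/2 : ℝ) • (x + y) - zs))
        gcongr
        nlinarith
      have h6 : ε1 / 8 * QQ (x - y) = ε1 / 2 * QQ v := by rw [hv3]; ring
      unfold PhiB at hΦ
      linarith
    exact max_contra hΩo hu hpsh hKE hx hy rfl (hball _ hm2) (by linarith) hε hμ hΛ hrM hlt hD hΦ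
      hglob (hμK x hxK) (hμK y hyK) (hΛK x hxK) (hΛK y hyK) hnum
  -- conclusion
  obtain ⟨M1, hM1, hM1'⟩ := exists_between hm0
  set η : ℝ := Real.exp (-(α * M1)) - Real.exp (-(α * R2)) with hη
  have hη0 : 0 < η := by
    rw [hη, sub_pos, Real.exp_lt_exp]
    nlinarith
  refine ⟨8 * ε * η, by positivity, ?_⟩
  have hcont : Continuous fun m : Fin n → ℂ => QQ (m - zs) :=
    QQ_cont.comp (continuous_id.sub continuous_const)
  filter_upwards [(hcont.tendsto m0).eventually (gt_mem_nhds hM1)] with m hm v h1 h2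
  have e1 : (1/2:ℝ) • ((m + v) + (m - v)) = m := by module
  have e2 : (m + v) - (m - v) = (2:ℝ) • v := by module
  have := main _ h1 _ h2 (by rw [e1]; linarith)
  unfold PhiB at this
  rw [e1, e2, QQ_smul] at this
  have h3 : η ≤ Real.exp (-(α * QQ (m - zs))) - Real.exp (-(α * R2)) := by
    rw [hη]
    have : Real.exp (-(α * M1)) ≤ Real.exp (-(α * QQ (m - zs))) := by
      rw [Real.exp_le_exp]
      nlinarith
    linarith
  have h4 : ε * η * (2 ^ 2 * QQ v) ≤
      ε * (Real.exp (-(α * QQ (m - zs))) - Real.exp (-(α * R2))) * (2 ^ 2 * QQ v) := by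
    have := QQ_nonneg v
    gcongr
  linarith

open Filter Topology in
lemma good_all {n : ℕ} {Ω : Set (Fin n → ℂ)} (hΩo : IsOpen Ω)
    (hΩb : Bornology.IsBounded Ω) (hΩc : Convex ℝ Ω)
    {u : (Fin n → ℂ) → ℝ} (hu : ContDiffOn ℝ (⊤ : ℕ∞) u Ω)
    (hpsh : ∀ z ∈ Ω, (hessA u z).PosDef)
    (hKE : ∀ z ∈ Ω, (hessA u z).det = (Real.exp ((n + 1) * u z) : ℂ))
    (hblow : ∀ p ∈ frontier Ω, Filter.Tendsto u (nhdsWithin p Ω) Filter.atTop) :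
    ∀ z ∈ Ω, GoodAt Ω u z := by
  intro z0 hz0
  have hmc : ∀ x ∈ Ω, ∀ y ∈ Ω, u ((1/2 : ℝ) • (x + y)) ≤ u x / 2 + u y / 2 :=
    fun x hx y hy => midpoint_convex hΩo hΩb hΩc hu hpsh hKE hblow hx hy
  obtain ⟨p, hp, hpg⟩ := good_nonempty hΩo hΩb hΩc hz0 hu hblow hmc
  refine hΩc.isPreconnected.subset_of_closure_inter_subset (goodAt_open Ω u) ⟨p, hp, hpg⟩ ?_ hz0
  rintro z ⟨hzc, hz⟩
  obtain ⟨r, hr, hrb⟩ := Metric.isOpen_iff.1 hΩo z hz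
  have hcont : Continuous fun a : Fin n → ℂ => QQ (z - a) :=
    QQ_cont.comp (continuous_const.sub continuous_id)
  have hev : ∀ᶠ a in 𝓝 z, QQ (z - a) < (r / 2) ^ 2 := by
    have := hcont.tendsto z
    rw [sub_self, (QQ_zero_iff _).2 rfl] at this
    exact this.eventually (gt_mem_nhds (by positivity))
  obtain ⟨zs, hzs, hev1, hd⟩ := ((mem_closure_iff_frequently.1 hzc).and_eventually
    (hev.and (Metric.ball_mem_nhds z (half_pos hr)))).exists
  refine propagate hΩo hΩb hu hpsh hKE hblow hmc hzs (R2 := (r / 2) ^ 2) ?_ hev1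
  intro m hm
  apply hrb
  have h1 : dist m zs ≤ r / 2 := by
    rw [dist_eq_norm]
    exact le_of_sq_le_sq ((norm_sq_le_QQ _).trans hm) (half_pos hr).le
  have h2 : dist zs z < r / 2 := hd
  have := dist_triangle m zs z
  rw [Metric.mem_ball]
  linarith

open Filter Topology in
lemma good_hess {n : ℕ} {Ω : Set (Fin n → ℂ)} (hΩo : IsOpen Ω)
    {u : (Fin n → ℂ) → ℝ} (hu : ContDiffOn ℝ (⊤ : ℕ∞) u Ω) {z : Fin n → ℂ} (hz : z ∈ Ω)
    (hg : GoodAt Ω u z) {w : Fin n → ℂ} (hw : w ≠ 0) : 0 < fderiv ℝ (fderiv ℝ u) z w w := by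
  obtain ⟨ε, hε, hev⟩ := hg
  have hq : 0 < QQ w := lt_of_le_of_ne (QQ_nonneg w) fun h => hw ((QQ_zero_iff w).1 h.symm)
  have h0 := hev.self_of_nhds
  have := max_cond hΩo hu hz hz hz w (-w) 0 (j := fun s => ε / 2 * QQ w * s ^ 2)
    (j' := fun s => ε * QQ w * s) (c := ε * QQ w)
    (fun s => (((hasDerivAt_id s).pow 2).const_mul (ε / 2 * QQ w)).congr_deriv (by simp; ring))
    (((hasDerivAt_id (0:ℝ)).const_mul (ε * QQ w)).congr_deriv (by simp)) (by
      filter_upwards [line_nhds hΩo hz w, line_nhds hΩo hz (-w)] with s h1 h2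
      have e : z + s • (-w) = z - s • w := by module
      rw [e] at h2 ⊢
      have := h0 (s • w) h1 h2
      rw [QQ_smul] at this
      simp
      linarith)
  simp at this
  have h3 : 0 < ε * QQ w := by positivity
  linarith

theorem M_posdef_of_KE (n : ℕ) (hn : 1 ≤ n)
    (Ω : Set (Fin n → ℂ)) (hΩo : IsOpen Ω) (hΩb : Bornology.IsBounded Ω)
    (hΩsc : StrictConvex ℝ Ω)
    (hΩsmooth : ∃ ρ : (Fin n → ℂ) → ℝ, ContDiff ℝ (⊤ : ℕ∞) ρ ∧
      Ω = {z | ρ z < 0} ∧ frontier Ω = {z | ρ z = 0} ∧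
      ∀ z ∈ frontier Ω, fderiv ℝ ρ z ≠ 0)
    (u : (Fin n → ℂ) → ℝ) (hu : ContDiffOn ℝ (⊤ : ℕ∞) u Ω)
    (hpsh : ∀ z ∈ Ω, (hessA u z).PosDef)
    (hKE : ∀ z ∈ Ω, (hessA u z).det = (Real.exp ((n + 1) * u z) : ℂ))
    (hblow : ∀ p ∈ frontier Ω, Filter.Tendsto u (nhdsWithin p Ω) Filter.atTop)
    (v : (Fin n → ℂ) → ℝ) (hv2 : ContDiffOn ℝ 2 v (closure Ω))
    (hvu : ∀ z ∈ Ω, v z = Real.exp (-u z))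
    (hv0 : ∀ z ∈ frontier Ω, v z = 0) :
    ∀ z ∈ Ω,
      (hessA u z - hessB u z * (mconj (hessA u z))⁻¹ * mconj (hessB u z)).PosDef := by
  intro z hz
  have hg := good_all hΩo hΩb hΩsc.convex hu hpsh hKE hblow z hz
  refine schur_posdef _ _ (hpsh z hz) (hessB_symm hΩo hu hz) fun w hw => ?_
  have h1 := good_hess hΩo hu hz hg hw
  have h2 := form_A hΩo hu hz (star w)
  rw [star_star] at h2
  rw [h2, form_B hΩo hu hz, Complex.ofReal_re]
  unfold leviF
  linarith

end
end
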